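/- Let C = ⟨A, B, Q, q0, δ, K, col⟩ be a locally determined deterministic concurrent arena and let W ⊆ K^ω be Borel. Then the game ⟨C, W⟩ is determined: either Player A has a winning color strategy or Player B has a winning color strategy. -/

import Mathlib

open MeasureTheory
open scoped Classical

universe u

/-- The cylinder set generated by a finite word. -/
def Cyl {K : Type u} (w : List K) : Set (ℕ → K) :=
  {ρ | ∀ i : ℕ, ∀ h : i < w.length, ρ i = w.get ⟨i, h⟩}

/-- The σ-algebra on `ℕ → K` generated by cylinder sets. -/
def BorelSeq (K : Type u) : MeasurableSpace (ℕ → K) :=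
  MeasurableSpace.generateFrom {s | ∃ w : List K, s = Cyl w}

/-- A game form (given by its outcome function `ρ : S_A → S_B → O`) is determined if
for every subset `V` of outcomes, either Player A can force the outcome into `V`,
or Player B can force it out of `V`. -/
def GFDetermined {SA SB O : Type u} (ρ : SA → SB → O) : Prop :=
  ∀ V : Set O, (∃ a, ∀ b, ρ a b ∈ V) ∨ (∃ b, ∀ a, ρ a b ∉ V)

/-- The color history `col(π_0,π_1) ⋯ col(π_{n-1},π_n)` of a play prefix. -/
def colorHist {Q K : Type u} (col : Q → Q → K) (π : ℕ → Q) (n : ℕ) : List K :=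
  List.ofFn (fun i : Fin n => col (π i) (π (i + 1)))

/-- The color sequence of an infinite play. -/
def colorSeq {Q K : Type u} (col : Q → Q → K) (π : ℕ → Q) : ℕ → K :=
  fun n => col (π n) (π (n + 1))

/-- `π` is a play consistent with Player A's color strategy `sA`. -/
def PlayA {A B Q K : Type u} (q0 : Q) (δ : Q → A → B → Q) (col : Q → Q → K)
    (sA : List K → Q → A) (π : ℕ → Q) : Prop :=
  π 0 = q0 ∧ ∀ n, ∃ b, π (n + 1) = δ (π n) (sA (colorHist col π n) (π n)) b

/-- `π` is a play consistent with Player B's color strategy `sB`. -/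
def PlayB {A B Q K : Type u} (q0 : Q) (δ : Q → A → B → Q) (col : Q → Q → K)
    (sB : List K → Q → B) (π : ℕ → Q) : Prop :=
  π 0 = q0 ∧ ∀ n, ∃ a, π (n + 1) = δ (π n) a (sB (colorHist col π n) (π n))

/-- Player A's color strategy `sA` is winning for objective `W`. -/
def WinA {A B Q K : Type u} (q0 : Q) (δ : Q → A → B → Q) (col : Q → Q → K)
    (W : Set (ℕ → K)) (sA : List K → Q → A) : Prop :=
  ∀ π : ℕ → Q, PlayA q0 δ col sA π → colorSeq col π ∈ W

/-- Player B's color strategy `sB` is winning for the objective complementary to `W`. -/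
def WinB {A B Q K : Type u} (q0 : Q) (δ : Q → A → B → Q) (col : Q → Q → K)
    (W : Set (ℕ → K)) (sB : List K → Q → B) : Prop :=
  ∀ π : ℕ → Q, PlayB q0 δ col sB π → colorSeq col π ∉ W


/-! ### Trees, plays, strategies, coverings -/

namespace BD

/-- A pruned game tree, given by its positions. -/
structure GTree : Type (u+1) where
  P : Type u
  len : P → ℕ
  par : P → P
  root : P
  len_root : len root = 0
  eq_root : ∀ p, len p = 0 → p = root
  len_par : ∀ p, len (par p) = len p - 1
  ext : ∀ p, ∃ c, par c = p ∧ len c = len p + 1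

namespace GTree
variable (T : GTree.{u})

def Child (p c : T.P) : Prop := T.par c = p ∧ T.len c = T.len p + 1

def IsPlay (x : ℕ → T.P) : Prop := x 0 = T.root ∧ ∀ n, T.Child (x n) (x (n+1))

def Strat : Type u := {s : T.P → T.P // ∀ p, T.Child p (s p)}

def Cons (b : Bool) (s : T.Strat) (x : ℕ → T.P) : Prop :=
  ∀ n, (Even n ↔ b = true) → x (n+1) = s.1 (x n)

noncomputable def dflt (p : T.P) : T.P := Classical.choose (T.ext p)

theorem dflt_child (p : T.P) : T.Child p (T.dflt p) := Classical.choose_spec (T.ext p)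

def anc (p : T.P) (m : ℕ) : T.P := T.par^[T.len p - m] p

variable {T}

theorem IsPlay.len {x : ℕ → T.P} (h : T.IsPlay x) (n : ℕ) : T.len (x n) = n := by
  induction n with
  | zero => rw [h.1, T.len_root]
  | succ n ih => rw [(h.2 n).2, ih]

theorem anc_self (p : T.P) {m : ℕ} (h : T.len p ≤ m) : T.anc p m = p := by
  unfold anc
  rw [Nat.sub_eq_zero_of_le h]; rfl

theorem anc_child {p c : T.P} (h : T.Child p c) {m : ℕ} (hm : m ≤ T.len p) :
    T.anc c m = T.anc p m := by
  unfold anc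
  rw [h.2, Nat.succ_sub hm, Function.iterate_succ_apply, h.1]

theorem len_iter (p : T.P) (j : ℕ) : T.len (T.par^[j] p) = T.len p - j := by
  induction j generalizing p with
  | zero => rfl
  | succ j ih => rw [Function.iterate_succ_apply, ih, T.len_par]; omega

theorem len_anc (p : T.P) {m : ℕ} (h : m ≤ T.len p) : T.len (T.anc p m) = m := by
  unfold anc; rw [len_iter]; omega

theorem par_child (p : T.P) (h : 0 < T.len p) : T.Child (T.par p) p :=
  ⟨rfl, by rw [T.len_par]; omega⟩

theorem anc_par {p : T.P} {m : ℕ} (h : m < T.len p) : T.anc (T.par p) m = T.anc p m :=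
  (anc_child (par_child p (by omega)) (by rw [T.len_par]; omega)).symm

theorem anc_anc (p : T.P) {m n : ℕ} (h : m ≤ n) : T.anc (T.anc p n) m = T.anc p m := by
  rcases le_total n (T.len p) with h1 | h1
  · unfold anc
    rw [len_iter, ← Function.iterate_add_apply]
    congr 2; omega
  · rw [anc_self p h1]

theorem anc_child_anc (p : T.P) {m : ℕ} (h : m < T.len p) :
    T.Child (T.anc p m) (T.anc p (m+1)) := by
  refine ⟨?_, by rw [len_anc _ h, len_anc _ h.le]⟩
  unfold anc
  have : T.len p - m = (T.len p - (m+1)) + 1 := by omega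
  rw [this, Function.iterate_succ_apply']

theorem IsPlay.anc {x : ℕ → T.P} (h : T.IsPlay x) {m n : ℕ} (hm : m ≤ n) :
    T.anc (x n) m = x m := by
  induction n with
  | zero => obtain rfl : m = 0 := by omega
            exact anc_self _ (by rw [h.len])
  | succ n ih =>
    rcases Nat.lt_or_ge n m with h1 | h1
    · obtain rfl : m = n+1 := by omega
      exact anc_self _ (by rw [h.len])
    · rw [anc_child (h.2 n) (by rw [h.len]; exact h1), ih h1]

/-- comparability of positions -/
def Cmp (u q : T.P) : Prop :=
  (T.len u ≤ T.len q ∧ T.anc q (T.len u) = u) ∨ (T.len q ≤ T.len u ∧ T.anc u (T.len q) = q)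

theorem cmp_play {x : ℕ → T.P} (h : T.IsPlay x) (m n : ℕ) : Cmp (x m) (x n) := by
  unfold Cmp
  rw [h.len, h.len]
  rcases le_total m n with h1 | h1
  · exact Or.inl ⟨h1, h.anc h1⟩
  · exact Or.inr ⟨h1, h.anc h1⟩

theorem cmp_le {u q : T.P} (h : Cmp u q) (hl : T.len q ≤ T.len u) : q = T.anc u (T.len q) := by
  rcases h with ⟨h1, h2⟩ | ⟨_, h2⟩
  · have : T.len q = T.len u := by omega
    rw [anc_self u this.ge, ← h2, anc_self q this.le]
  · exact h2.symm

theorem cmp_ge {u q : T.P} (h : Cmp u q) (hl : T.len u ≤ T.len q) : T.anc q (T.len u) = u := by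
  rcases h with ⟨_, h2⟩ | ⟨h1, h2⟩
  · exact h2
  · have : T.len q = T.len u := by omega
    rw [anc_self q this.le, ← h2, anc_self u this.ge]

/-- clopen sets of plays -/
def Clopen (T : GTree.{u}) (O : Set (ℕ → T.P)) : Prop :=
  ∀ x, T.IsPlay x → ∃ n, ∀ y, T.IsPlay y → y n = x n → (y ∈ O ↔ x ∈ O)

def Opn (T : GTree.{u}) (O : Set (ℕ → T.P)) : Prop :=
  ∀ x, T.IsPlay x → x ∈ O → ∃ n, ∀ y, T.IsPlay y → y n = x n → y ∈ O

theorem Clopen.compl {O : Set (ℕ → T.P)} (h : T.Clopen O) : T.Clopen Oᶜ := by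
  intro x hx
  obtain ⟨n, hn⟩ := h x hx
  exact ⟨n, fun y hy hyx => not_congr (hn y hy hyx)⟩

theorem Clopen.opn {O : Set (ℕ → T.P)} (h : T.Clopen O) : T.Opn O := by
  intro x hx hxO
  obtain ⟨n, hn⟩ := h x hx
  exact ⟨n, fun y hy hyx => (hn y hy hyx).2 hxO⟩

end GTree

/-- A `k`-covering of `T` by `S`. -/
structure Cov (k : ℕ) (S T : GTree.{u}) where
  π : S.P → T.P
  len_π : ∀ p, T.len (π p) = S.len p
  par_π : ∀ p, T.par (π p) = π (S.par p)
  inj : ∀ p q, S.len p ≤ k → S.len q ≤ k → π p = π q → p = q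
  surj : ∀ p, T.len p ≤ k → ∃ q, π q = p
  φ : Bool → S.Strat → T.Strat
  loc : ∀ b s s' n, (∀ p, S.len p < n → s.1 p = s'.1 p) →
    ∀ p, T.len p < n → (φ b s).1 p = (φ b s').1 p
  idk : ∀ b s p, S.len p < k → (φ b s).1 (π p) = π (s.1 p)
  lift : ∀ b s x, T.IsPlay x → T.Cons b (φ b s) x →
    ∃ y, S.IsPlay y ∧ S.Cons b s y ∧ ∀ n, π (y n) = x n

def Cov.refl (k : ℕ) (T : GTree.{u}) : Cov k T T where
  π := id
  len_π _ := rfl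
  par_π _ := rfl
  inj _ _ _ _ h := h
  surj p _ := ⟨p, rfl⟩
  φ _ s := s
  loc _ _ _ _ h := h
  idk _ _ _ _ := rfl
  lift _ _ x hx hc := ⟨x, hx, hc, fun _ => rfl⟩

def Cov.comp {k : ℕ} {R S T : GTree.{u}} (c : Cov k R S) (d : Cov k S T) : Cov k R T where
  π := d.π ∘ c.π
  len_π p := by simp [d.len_π, c.len_π]
  par_π p := by simp [d.par_π, c.par_π]
  inj p q hp hq h := c.inj p q hp hq (d.inj _ _ (by rwa [c.len_π]) (by rwa [c.len_π]) h)
  surj p hp := by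
    obtain ⟨q, rfl⟩ := d.surj p hp
    obtain ⟨r, rfl⟩ := c.surj q (by rwa [d.len_π] at hp)
    exact ⟨r, rfl⟩
  φ b s := d.φ b (c.φ b s)
  loc b s s' n h := d.loc b _ _ n (c.loc b s s' n h)
  idk b s p hp := by
    simp only [Function.comp]
    rw [d.idk b _ _ (by rwa [c.len_π]), c.idk b s p hp]
  lift b s x hx hc := by
    obtain ⟨y, hy, hyc, hyx⟩ := d.lift b _ x hx hc
    obtain ⟨z, hz, hzc, hzy⟩ := c.lift b _ y hy hyc
    exact ⟨z, hz, hzc, fun n => by simp [hzy, hyx]⟩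

theorem Cov.child {k : ℕ} {S T : GTree.{u}} (c : Cov k S T) {p q : S.P} (h : S.Child p q) :
    T.Child (c.π p) (c.π q) :=
  ⟨by rw [c.par_π, h.1], by rw [c.len_π, c.len_π, h.2]⟩

theorem Cov.root {k : ℕ} {S T : GTree.{u}} (c : Cov k S T) : c.π S.root = T.root :=
  T.eq_root _ (by rw [c.len_π, S.len_root])

theorem Cov.play {k : ℕ} {S T : GTree.{u}} (c : Cov k S T) {x : ℕ → S.P} (h : S.IsPlay x) :
    T.IsPlay (fun n => c.π (x n)) :=
  ⟨by simp only [h.1, c.root], fun n => c.child (h.2 n)⟩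

/-! ### Attractors -/

structure Att {P : Type u} (step : P → P → Prop) (own : P → Prop) (E : Set P) where
  Z : Set P
  f : P → P
  rk : P → Ordinal.{u}
  base : ∀ p ∈ E, p ∈ Z
  zown : ∀ p ∈ Z, p ∉ E → own p → step p (f p) ∧ f p ∈ Z ∧ rk (f p) < rk p
  zopp : ∀ p ∈ Z, p ∉ E → ¬ own p → ∀ c, step p c → c ∈ Z ∧ rk c < rk p
  nown : ∀ p, p ∉ Z → own p → ∀ c, step p c → c ∉ Z
  nopp : ∀ p, p ∉ Z → ¬ own p → ∃ c, step p c ∧ c ∉ Z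

inductive Rk {P : Type u} (step : P → P → Prop) (own : P → Prop) (E : Set P) :
    Ordinal.{u} → P → Prop
  | base (o p) : p ∈ E → Rk step own E o p
  | own (o o' p c) : own p → step p c → o' < o → Rk step own E o' c → Rk step own E o p
  | opp (o p) (g : P → Ordinal.{u}) : ¬ own p → (∀ c, step p c → g c < o) →
      (∀ c, step p c → Rk step own E (g c) c) → Rk step own E o p

theorem att_exists {P : Type u} (step : P → P → Prop) (own : P → Prop) (E : Set P) :
    Nonempty (Att step own E) := by
  let R := Rk step own E
  let Z : Set P := {p | ∃ o, R o p}
  let rk : P → Ordinal.{u} := fun p => sInf {o | R o p}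
  have hrk : ∀ p ∈ Z, R (rk p) p := fun p hp => csInf_mem (s := {o | R o p}) hp
  have hle : ∀ p o, R o p → rk p ≤ o := fun p o h => csInf_le' h
  have hown : ∀ p ∈ Z, p ∉ E → own p → ∃ c, step p c ∧ c ∈ Z ∧ rk c < rk p := by
    intro p hp hE ho
    have := hrk p hp
    generalize hr : rk p = r at this
    cases this with
    | base _ _ h => exact absurd h hE
    | own _ o' _ c _ h2 h3 h4 => exact ⟨c, h2, ⟨o', h4⟩, (hle c o' h4).trans_lt h3⟩
    | opp _ _ g h => exact absurd ho h
  refine ⟨⟨Z, fun p => if h : ∃ c, step p c ∧ c ∈ Z ∧ rk c < rk p then h.choose else p, rk,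
    fun p hp => ⟨0, Rk.base _ _ hp⟩, ?_, ?_, ?_, ?_⟩⟩
  · intro p hp hE ho
    have h := hown p hp hE ho
    simp only [dif_pos h]
    exact h.choose_spec
  · intro p hp hE ho c hc
    have := hrk p hp
    generalize hr : rk p = r at this
    cases this with
    | base _ _ h => exact absurd h hE
    | own _ o' _ c h => exact absurd h ho
    | opp _ _ g h h2 h3 => exact ⟨⟨_, h3 c hc⟩, (hle c _ (h3 c hc)).trans_lt (h2 c hc)⟩
  · rintro p hp ho c hc ⟨o, h⟩
    exact hp ⟨Order.succ o, Rk.own _ o _ c ho hc (Order.lt_succ o) h⟩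
  · intro p hp ho
    by_contra hcon
    push Not at hcon
    apply hp
    refine ⟨Order.succ (⨆ c, rk c), Rk.opp _ _ rk ho (fun c _ => ?_) (fun c hc => hrk c (hcon c hc))⟩
    exact Order.lt_succ_of_le (Ordinal.le_iSup rk c)

noncomputable def att {P : Type u} (step : P → P → Prop) (own : P → Prop) (E : Set P) :
    Att step own E := Classical.choice (att_exists step own E)

theorem rank_absurd {P : Type u} (rk : P → Ordinal.{u}) (x : ℕ → P) (G : ℕ → Prop)
    (h : ∀ n, G n → G (n+1) ∧ rk (x (n+1)) < rk (x n)) (n : ℕ) : ¬ G n := by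
  suffices ∀ o n, rk (x n) = o → ¬ G n from this _ n rfl
  intro o
  induction o using WellFoundedLT.induction with
  | ind o ih =>
    rintro n rfl hG
    exact ih _ (h n hG).2 (n+1) rfl (h n hG).1

/-! ### Open determinacy -/

theorem open_det (T : GTree.{u}) (O : Set (ℕ → T.P)) (hO : T.Opn O) :
    (∃ s : T.Strat, ∀ x, T.IsPlay x → T.Cons true s x → x ∈ O) ∨
    (∃ s : T.Strat, ∀ x, T.IsPlay x → T.Cons false s x → x ∉ O) := by
  let E : Set T.P := {p | ∀ y, T.IsPlay y → y (T.len p) = p → y ∈ O}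
  let a := att T.Child (fun p => Even (T.len p)) E
  by_cases hr : T.root ∈ a.Z
  · left
    refine ⟨⟨fun p => if T.Child p (a.f p) then a.f p else T.dflt p, fun p => ?_⟩, ?_⟩
    · dsimp only
      split_ifs with h
      · exact h
      · exact T.dflt_child p
    · intro x hx hc
      by_contra hxO
      have hnE : ∀ n, x n ∉ E := fun n h => hxO (h x hx (by rw [hx.len]))
      refine rank_absurd a.rk x (fun n => x n ∈ a.Z) (fun n hn => ?_) 0 (by simpa only [hx.1] using hr)
      by_cases he : Even n
      · have h1 := a.zown (x n) hn (hnE n) (by simpa only [hx.len] using he)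
        have h2 := hc n (by simpa using he)
        simp only [if_pos h1.1] at h2
        rw [h2]; exact h1.2
      · exact a.zopp (x n) hn (hnE n) (by simpa only [hx.len] using he) _ (hx.2 n)
  · right
    refine ⟨⟨fun p => if h : ∃ c, T.Child p c ∧ c ∉ a.Z then h.choose else T.dflt p, fun p => ?_⟩, ?_⟩
    · dsimp only
      split_ifs with h
      · exact h.choose_spec.1
      · exact T.dflt_child p
    · intro x hx hc hxO
      have hZ : ∀ n, x n ∉ a.Z := by
        intro n
        induction n with
        | zero => rw [hx.1]; exact hr
        | succ n ih =>
          by_cases he : Even n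
          · exact a.nown (x n) ih (by simpa only [hx.len] using he) _ (hx.2 n)
          · have h1 := a.nopp (x n) ih (by simpa only [hx.len] using he)
            have h2 := hc n (by simpa using he)
            simp only [dif_pos h1] at h2
            rw [h2]; exact h1.choose_spec.2
      obtain ⟨n, hn⟩ := hO x hx hxO
      refine hZ n (a.base _ ?_)
      intro y hy hyx
      rw [hx.len] at hyx
      exact hn y hy hyx

/-! ### Unraveling an open set -/

namespace Base

open GTree

variable (T : GTree.{u}) (N : ℕ) (E : Set T.P)

/-- quasi-strategies for player I -/
def QI (S : Set T.P) : Prop :=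
  ∀ q ∈ S, (Even (T.len q) → ∃ c ∈ S, T.Child q c) ∧ (¬ Even (T.len q) → ∀ c, T.Child q c → c ∈ S)

/-- quasi-strategies for player II inside `S`, avoiding `E` -/
def QII (S R : Set T.P) : Prop :=
  R ⊆ S ∧ (∀ q ∈ R, q ∉ E) ∧ ∀ q ∈ R, (Even (T.len q) → ∀ c ∈ S, T.Child q c → c ∈ R) ∧
    (¬ Even (T.len q) → ∃ c ∈ R, T.Child q c)

def Opt (S R : Set T.P) (b : Bool) : Prop :=
  (b = true ∧ ∃ u ∈ S, u ∈ E ∧ N + 2 ≤ T.len u ∧ R = {q | Cmp u q}) ∨ (b = false ∧ QII T E S R)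

/-- validity of auxiliary moves -/
def V (p : T.P) (S R : Set T.P) (b : Bool) : Prop :=
  (N < T.len p → QI T S ∧ T.anc p (N+1) ∈ S) ∧
  (N + 1 < T.len p → (∀ m, N + 2 ≤ m → m ≤ T.len p → T.anc p m ∈ R) ∧ Opt T N E S R b)

@[ext]
structure BPos where
  p : T.P
  S : Set T.P
  R : Set T.P
  b : Bool
  v : V T N E p S R b
  h1 : T.len p ≤ N → S = ∅
  h2 : T.len p ≤ N + 1 → R = ∅
  h3 : T.len p ≤ N + 1 → b = false

variable {T N E}

noncomputable def tr (p : T.P) (S R : Set T.P) (b : Bool) (h : V T N E p S R b) : BPos T N E where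
  p := p
  S := if T.len p ≤ N then ∅ else S
  R := if T.len p ≤ N + 1 then ∅ else R
  b := if T.len p ≤ N + 1 then false else b
  v := by
    constructor
    · intro h1
      rw [if_neg (by omega)]
      exact h.1 h1
    · intro h1
      rw [if_neg (by omega), if_neg (by omega), if_neg (by omega)]
      exact h.2 h1
  h1 := fun h => if_pos h
  h2 := fun h => if_pos h
  h3 := fun h => if_pos h

theorem V.par {p : T.P} {S R : Set T.P} {b : Bool} (h : V T N E p S R b) :
    V T N E (T.par p) S R b := by
  have hl := T.len_par p
  constructor
  · intro h1
    have := h.1 (by omega)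
    rw [anc_par (by omega)]
    exact this
  · intro h1
    have := h.2 (by omega)
    refine ⟨fun m hm hm' => ?_, this.2⟩
    rw [anc_par (by omega)]
    exact this.1 m hm (by omega)

theorem V.triv {p : T.P} {S R : Set T.P} {b : Bool} (h : T.len p ≤ N) :
    V T N E p S R b := ⟨fun _ => by omega, fun _ => by omega⟩

noncomputable def bpar (x : BPos T N E) : BPos T N E := tr (T.par x.p) x.S x.R x.b x.v.par

/-- An extension of a valid position. -/
theorem V.child {p c : T.P} {S R : Set T.P} {b : Bool} (hc : T.Child p c)
    (hp : V T N E p S R b) (h1 : T.len p = N → QI T S ∧ c ∈ S)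
    (h2 : N + 1 ≤ T.len p → c ∈ R ∧ Opt T N E S R b) : V T N E c S R b := by
  have hl := hc.2
  constructor
  · intro h
    rcases Nat.lt_or_ge N (T.len p) with h3 | h3
    · rw [anc_child hc (by omega)]; exact hp.1 h3
    · rw [anc_self c (by omega)]; exact h1 (by omega)
  · intro h
    refine ⟨fun m hm hm' => ?_, (h2 (by omega)).2⟩
    rcases Nat.lt_or_ge (T.len p) m with h3 | h3
    · rw [anc_self c (by omega)]; exact (h2 (by omega)).1
    · rw [anc_child hc (by omega)]; exact (hp.2 (by omega)).1 m hm h3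

theorem tr_self (x : BPos T N E) : tr x.p x.S x.R x.b x.v = x := by
  ext1
  · rfl
  · simp only [tr]; split_ifs with h
    · exact (x.h1 h).symm
    · rfl
  · simp only [tr]; split_ifs with h
    · exact (x.h2 h).symm
    · rfl
  · simp only [tr]; split_ifs with h
    · exact (x.h3 h).symm
    · rfl

theorem tr_congr {p : T.P} {S R S' R' : Set T.P} {b b' : Bool} (h : V T N E p S R b)
    (h' : V T N E p S' R' b') (hS : N < T.len p → S = S')
    (hR : N + 1 < T.len p → R = R' ∧ b = b') : tr p S R b h = tr p S' R' b' h' := by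
  ext1
  · rfl
  · simp only [tr]; split_ifs with h
    · rfl
    · exact hS (by omega)
  · simp only [tr]; split_ifs with h
    · rfl
    · exact (hR (by omega)).1
  · simp only [tr]; split_ifs with h
    · rfl
    · exact (hR (by omega)).2

theorem bpar_tr {c : T.P} {S R : Set T.P} {b : Bool} (h : V T N E c S R b) :
    bpar (tr c S R b h) = tr (T.par c) S R b h.par := by
  have hl := T.len_par c
  unfold bpar
  apply tr_congr
  · intro h1
    simp only [tr] at h1 ⊢
    rw [T.len_par] at h1
    rw [if_neg (by omega)]
  · intro h1
    simp only [tr] at h1 ⊢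
    rw [T.len_par] at h1
    rw [if_neg (by omega), if_neg (by omega)]
    exact ⟨rfl, rfl⟩

theorem bpar_tr' {x : BPos T N E} {c : T.P} {S R : Set T.P} {b : Bool} (h : V T N E c S R b)
    (hc : T.Child x.p c) (hS : N < T.len x.p → S = x.S)
    (hR : N + 1 < T.len x.p → R = x.R ∧ b = x.b) : bpar (tr c S R b h) = x := by
  rw [bpar_tr]
  have h' := h.par
  obtain ⟨h1, h2⟩ := hc
  have : ∀ q (hq : V T N E q S R b), q = x.p → tr q S R b hq = x := by
    rintro q hq rfl
    conv_rhs => rw [← tr_self x]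
    exact tr_congr _ _ hS hR
  exact this _ _ h1

theorem ext_child (hN : Even N) (x : BPos T N E) :
    ∃ z : BPos T N E, bpar z = x ∧ T.len z.p = T.len x.p + 1 := by
  suffices ∃ c S R b, T.Child x.p c ∧ (N < T.len x.p → S = x.S) ∧
    (N + 1 < T.len x.p → R = x.R ∧ b = x.b) ∧ V T N E c S R b by
    obtain ⟨c, S, R, b, h1, h2, h3, h4⟩ := this
    exact ⟨tr c S R b h4, bpar_tr' h4 h1 h2 h3, h1.2⟩
  have hv := x.v
  rcases Nat.lt_trichotomy (T.len x.p) N with hl | hl | hl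
  · have hc := T.dflt_child x.p
    exact ⟨_, x.S, x.R, x.b, hc, fun _ => rfl, fun _ => ⟨rfl, rfl⟩, V.triv (by rw [hc.2]; omega)⟩
  · have hc := T.dflt_child x.p
    refine ⟨_, Set.univ, x.R, x.b, hc, fun _ => by omega, fun _ => by omega,
      V.child hc (V.triv hl.le) (fun _ => ⟨?_, trivial⟩) (fun _ => by omega)⟩
    exact fun q _ => ⟨fun _ => ⟨_, trivial, T.dflt_child q⟩, fun _ _ _ => trivial⟩
  · have hS := hv.1 hl
    rcases Nat.lt_or_ge (N+1) (T.len x.p) with hl2 | hl2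
    · obtain ⟨hR, hopt⟩ := hv.2 hl2
      suffices ∃ c ∈ x.R, T.Child x.p c by
        obtain ⟨c, hcR, hc⟩ := this
        exact ⟨c, x.S, x.R, x.b, hc, fun _ => rfl, fun _ => ⟨rfl, rfl⟩,
          V.child hc hv (fun _ => by omega) (fun _ => ⟨hcR, hopt⟩)⟩
      have hp : x.p ∈ x.R := by simpa only [anc_self x.p le_rfl] using hR _ hl2 le_rfl
      rcases hopt with ⟨_, u, _, _, _, hu⟩ | ⟨_, hq⟩
      · rw [hu] at hp ⊢
        rcases Nat.lt_or_ge (T.len x.p) (T.len u) with h | h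
        · refine ⟨T.anc u (T.len x.p + 1), Or.inr ?_, ?_⟩
          · rw [len_anc _ h]; exact ⟨h, rfl⟩
          · have h5 := anc_child_anc u h
            rwa [← cmp_le hp h.le] at h5
        · have hc := T.dflt_child x.p
          refine ⟨_, Or.inl ⟨by rw [hc.2]; omega, ?_⟩, hc⟩
          rw [anc_child hc h]
          exact cmp_ge hp h
      · by_cases he : Even (T.len x.p)
        · obtain ⟨c, hcS, hc⟩ := (hS.1 _ (hq.1 hp)).1 he
          exact ⟨c, (hq.2.2 _ hp).1 he c hcS hc, hc⟩
        · exact (hq.2.2 _ hp).2 he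
    · have hl3 : T.len x.p = N + 1 := by omega
      have hp : x.p ∈ x.S := by simpa only [anc_self x.p hl3.le] using hS.2
      have he : ¬ Even (T.len x.p) := by rw [hl3]; simpa [Nat.even_add_one] using hN
      have hc := T.dflt_child x.p
      set c := T.dflt x.p with hcd
      have hcS : c ∈ x.S := (hS.1 _ hp).2 he c hc
      have hcl := hc.2
      by_cases hu : ∃ u ∈ x.S, u ∈ E ∧ T.len c ≤ T.len u ∧ T.anc u (T.len c) = c
      · obtain ⟨u, huS, huE, hul, hua⟩ := hu
        refine ⟨c, x.S, {q | Cmp u q}, true, hc, fun _ => rfl, fun _ => by omega, V.child hc ?_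
          (fun _ => by omega) (fun _ => ⟨Or.inr ⟨hul, hua⟩, Or.inl ⟨rfl, u, huS, huE, by omega, rfl⟩⟩)⟩
        exact ⟨fun _ => hS, fun _ => by omega⟩
      · refine ⟨c, x.S, {q | q ∈ x.S ∧ T.len c ≤ T.len q ∧ T.anc q (T.len c) = c}, false, hc,
          fun _ => rfl, fun _ => by omega, V.child hc ⟨fun _ => hS, fun _ => by omega⟩
          (fun _ => by omega) (fun _ => ⟨⟨hcS, le_rfl, anc_self _ le_rfl⟩, Or.inr ⟨rfl, fun q hq => hq.1,
            fun q hq hqE => hu ⟨q, hq.1, hqE, hq.2⟩, fun q hq => ⟨fun he d hd hqd => ?_, fun he => ?_⟩⟩⟩)⟩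
        · exact ⟨hd, by rw [hqd.2]; exact hq.2.1.trans (Nat.le_succ _), by
            rw [anc_child hqd hq.2.1]; exact hq.2.2⟩
        · have hqd := T.dflt_child q
          exact ⟨_, ⟨(hS.1 q hq.1).2 he _ hqd, by rw [hqd.2]; exact hq.2.1.trans (Nat.le_succ _), by
            rw [anc_child hqd hq.2.1]; exact hq.2.2⟩, hqd⟩

variable (T N E) in
/-- the covering tree -/
noncomputable def BT (hN : Even N) : GTree.{u} where
  P := BPos T N E
  len x := T.len x.p
  par := bpar
  root := tr T.root ∅ ∅ false (V.triv (by rw [T.len_root]; omega))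
  len_root := T.len_root
  eq_root x hx := by
    have h0 := T.eq_root _ hx
    ext1
    · exact h0
    · rw [x.h1 (by omega)]; simp [tr, T.len_root]
    · rw [x.h2 (by omega)]; simp [tr, T.len_root]
    · rw [x.h3 (by omega)]; simp [tr, T.len_root]
  len_par x := T.len_par _
  ext := ext_child hN

/-- the move of `s` at a tree position with given auxiliary moves -/
noncomputable def ap {hN : Even N} (s : (BT T N E hN).Strat) (p : T.P) (S R : Set T.P) (b : Bool) :
    T.P := if h : V T N E p S R b then (s.1 (tr p S R b h)).p else T.dflt p

theorem bchild {hN : Even N} {x z : BPos T N E} (h : (BT T N E hN).Child x z) : T.Child x.p z.p :=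
  ⟨by rw [← h.1]; rfl, h.2⟩

/-- A child of a position keeps the auxiliary moves already made. -/
theorem bchild_eq {hN : Even N} {p c : T.P} {S R : Set T.P} {b : Bool} {h : V T N E p S R b}
    {z : BPos T N E} (hz : (BT T N E hN).Child (tr p S R b h) z) (hc : V T N E c S R b)
    (h0 : z.p = c) (h1 : T.len p = N → z.S = S) (h2 : T.len p = N + 1 → z.R = R ∧ z.b = b) :
    z = tr c S R b hc := by
  have hb := hz.1
  have hl : T.len z.p = T.len p + 1 := (bchild hz).2
  have hlp := T.len_par z.p
  subst h0
  conv_lhs => rw [← tr_self z]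
  have e1 : (bpar z).S = (tr p S R b h).S := congrArg BPos.S hb
  have e2 : (bpar z).R = (tr p S R b h).R := congrArg BPos.R hb
  have e3 : (bpar z).b = (tr p S R b h).b := congrArg BPos.b hb
  simp only [bpar, tr] at e1 e2 e3
  apply tr_congr
  · intro h3
    by_cases h4 : T.len p = N
    · exact h1 h4
    · rwa [if_neg (by omega), if_neg (by omega)] at e1
  · intro h3
    by_cases h4 : T.len p = N + 1
    · exact h2 h4
    · rw [if_neg (by omega), if_neg (by omega)] at e2 e3
      exact ⟨e2, e3⟩

theorem ap_child {hN : Even N} (s : (BT T N E hN).Strat) (p : T.P) (S R : Set T.P) (b : Bool) :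
    T.Child p (ap s p S R b) := by
  unfold ap
  split_ifs with h
  · exact bchild (s.2 (tr p S R b h))
  · exact T.dflt_child p

theorem ap_loc {hN : Even N} {s s' : (BT T N E hN).Strat} {n : ℕ}
    (h : ∀ p, (BT T N E hN).len p < n → s.1 p = s'.1 p) {p : T.P} (hp : T.len p < n) :
    ap s p = ap s' p := by
  funext S R b
  unfold ap
  split_ifs with hv
  · rw [h (tr p S R b hv) hp]
  · rfl

/-- first hitting time of `U` along the ancestors of `p` -/
noncomputable def FH (N : ℕ) (U : Set T.P) (p : T.P) : ℕ :=
  sInf {m | N + 2 ≤ m ∧ m ≤ T.len p ∧ T.anc p m ∈ U}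

/-- the common shape of the transferred strategies -/
noncomputable def core (N : ℕ) (apf : Set T.P → Set T.P → Bool → T.P) (U Z : Set T.P) (f : T.P → T.P)
    (Sof : T.P → Set T.P) (S R : Set T.P) (p : T.P) : T.P :=
  if ∃ m, N + 2 ≤ m ∧ m ≤ T.len p ∧ T.anc p m ∈ U then
    apf (Sof (T.anc p (FH N U p))) {q | Cmp (T.anc p (FH N U p)) q} true
  else if p ∈ Z ∧ T.Child p (f p) then f p
  else apf S R false

theorem core_child {N : ℕ} {apf : Set T.P → Set T.P → Bool → T.P} {U Z : Set T.P} {f : T.P → T.P}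
    {Sof : T.P → Set T.P} {S R : Set T.P} {p : T.P} (h : ∀ S R b, T.Child p (apf S R b)) :
    T.Child p (core N apf U Z f Sof S R p) := by
  unfold core
  split_ifs with h1 h2
  · exact h _ _ _
  · exact h2.2
  · exact h _ _ _

/-- Lifting of a play with given auxiliary moves. -/
theorem lift_play {hN : Even N} {x : ℕ → T.P} (hx : T.IsPlay x) {S R : Set T.P} {b : Bool}
    (hV : ∀ n, V T N E (x n) S R b) : (BT T N E hN).IsPlay (fun n => tr (x n) S R b (hV n)) := by
  constructor
  · exact (BT T N E hN).eq_root _ (hx.len 0)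
  · intro n
    refine ⟨?_, (hx.2 n).2⟩
    refine bpar_tr' _ (hx.2 n) ?_ ?_
    · intro h; simp only [tr] at h ⊢; rw [if_neg (by omega)]
    · intro h; simp only [tr] at h ⊢; rw [if_neg (by omega), if_neg (by omega)]; exact ⟨rfl, rfl⟩

theorem V_play {x : ℕ → T.P} (hx : T.IsPlay x) {S R : Set T.P} {b : Bool} (n : ℕ)
    (h1 : N < n → QI T S ∧ x (N+1) ∈ S)
    (h2 : N + 1 < n → (∀ m, N + 2 ≤ m → m ≤ n → x m ∈ R) ∧ Opt T N E S R b) :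
    V T N E (x n) S R b := by
  constructor
  · intro h
    rw [hx.len] at h
    rw [hx.anc h]; exact h1 h
  · intro h
    rw [hx.len] at h
    refine ⟨fun m hm hm' => ?_, (h2 h).2⟩
    rw [hx.len] at hm'
    rw [hx.anc hm']; exact (h2 h).1 m hm hm'

theorem bchild_S {hN : Even N} {p : T.P} {S R : Set T.P} {b : Bool} {h : V T N E p S R b}
    {z : BPos T N E} (hz : (BT T N E hN).Child (tr p S R b h) z) (hp : N < T.len p) : z.S = S := by
  have hb := hz.1
  have hl : T.len z.p = T.len p + 1 := (bchild hz).2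
  have hlp := T.len_par z.p
  have e1 : (bpar z).S = (tr p S R b h).S := congrArg BPos.S hb
  simp only [bpar, tr] at e1
  rwa [if_neg (by omega), if_neg (by omega)] at e1

theorem bchild_R {hN : Even N} {p : T.P} {S R : Set T.P} {b : Bool} {h : V T N E p S R b}
    {z : BPos T N E} (hz : (BT T N E hN).Child (tr p S R b h) z) (hp : N + 1 < T.len p) :
    z.R = R ∧ z.b = b := by
  have hb := hz.1
  have hl : T.len z.p = T.len p + 1 := (bchild hz).2
  have hlp := T.len_par z.p
  have e1 : (bpar z).R = (tr p S R b h).R := congrArg BPos.R hb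
  have e2 : (bpar z).b = (tr p S R b h).b := congrArg BPos.b hb
  simp only [bpar, tr] at e1 e2
  rw [if_neg (by omega), if_neg (by omega)] at e1 e2
  exact ⟨e1, e2⟩

theorem BPos.mem_R (z : BPos T N E) (hp : N + 1 < T.len z.p) : z.p ∈ z.R := by
  simpa only [anc_self _ le_rfl] using (z.v.2 hp).1 _ hp le_rfl

theorem lift_gen {hN : Even N} {x : ℕ → T.P} (hx : T.IsPlay x) {S R : Set T.P} {b : Bool}
    (hV : ∀ n, V T N E (x n) S R b) (pl : Bool) (s : (BT T N E hN).Strat)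
    (hc : ∀ n, (Even n ↔ pl = true) → (s.1 (tr (x n) S R b (hV n))).p = x (n+1) ∧
      (n = N → (s.1 (tr (x n) S R b (hV n))).S = S) ∧
      (n = N + 1 → (s.1 (tr (x n) S R b (hV n))).R = R ∧ (s.1 (tr (x n) S R b (hV n))).b = b)) :
    ∃ y, (BT T N E hN).IsPlay y ∧ (BT T N E hN).Cons pl s y ∧ ∀ n, BPos.p (y n) = x n := by
  refine ⟨_, lift_play hx hV, ?_, fun n => rfl⟩
  intro n hn
  obtain ⟨h1, h2, h3⟩ := hc n hn
  exact (bchild_eq (s.2 _) (hV (n+1)) h1 (by rw [hx.len]; exact h2) (by rw [hx.len]; exact h3)).symm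

theorem FH_play {x : ℕ → T.P} (hx : T.IsPlay x) {U : Set T.P} {m0 n : ℕ} (h0 : N + 2 ≤ m0)
    (hU : x m0 ∈ U) (hmin : ∀ m, N + 2 ≤ m → m < m0 → x m ∉ U) (hn : m0 ≤ n) :
    FH N U (x n) = m0 := by
  unfold FH
  apply le_antisymm
  · refine Nat.sInf_le ⟨h0, by rwa [hx.len], by rwa [hx.anc hn]⟩
  · refine le_csInf ⟨m0, h0, by rwa [hx.len], by rwa [hx.anc hn]⟩ ?_
    rintro m ⟨h1, h2, h3⟩
    rw [hx.len] at h2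
    rw [hx.anc h2] at h3
    by_contra h4
    exact hmin m h1 (by omega) h3

theorem core_hit {x : ℕ → T.P} (hx : T.IsPlay x) {U : Set T.P} {m0 n : ℕ} (h0 : N + 2 ≤ m0)
    (hU : x m0 ∈ U) (hmin : ∀ m, N + 2 ≤ m → m < m0 → x m ∉ U) (hn : m0 ≤ n)
    {apf : Set T.P → Set T.P → Bool → T.P} {Z : Set T.P} {f : T.P → T.P}
    {Sof : T.P → Set T.P} {S R : Set T.P} :
    core N apf U Z f Sof S R (x n) = apf (Sof (x m0)) {q | Cmp (x m0) q} true := by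
  unfold core
  rw [if_pos ⟨m0, h0, by rwa [hx.len], by rwa [hx.anc hn]⟩, FH_play hx h0 hU hmin hn, hx.anc hn]

theorem core_nohit {x : ℕ → T.P} (hx : T.IsPlay x) {U : Set T.P} {n : ℕ}
    (hmin : ∀ m, N + 2 ≤ m → x m ∉ U)
    {apf : Set T.P → Set T.P → Bool → T.P} {Z : Set T.P} {f : T.P → T.P}
    {Sof : T.P → Set T.P} {S R : Set T.P} :
    core N apf U Z f Sof S R (x n) =
      if x n ∈ Z ∧ T.Child (x n) (f (x n)) then f (x n) else apf S R false := by
  unfold core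
  rw [if_neg]
  rintro ⟨m, h1, h2, h3⟩
  rw [hx.len] at h2
  rw [hx.anc h2] at h3
  exact hmin m h1 h3

theorem ap_eq {hN : Even N} (s : (BT T N E hN).Strat) {p : T.P} {S R : Set T.P} {b : Bool}
    (h : V T N E p S R b) : ap s p S R b = (s.1 (tr p S R b h)).p := by
  unfold ap; rw [dif_pos h]

/-- Lifting when the play reaches an exit position. -/
theorem lift_hit {hN : Even N} {x : ℕ → T.P} (hx : T.IsPlay x) {S : Set T.P} {m0 : ℕ}
    (h0 : N + 2 ≤ m0) (hS : QI T S) (hxS : x (N+1) ∈ S) (huS : x m0 ∈ S) (huE : x m0 ∈ E)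
    (pl : Bool) (s : (BT T N E hN).Strat)
    (hc1 : ∀ n, (Even n ↔ pl = true) → m0 ≤ n → x (n+1) = ap s (x n) S {q | Cmp (x m0) q} true)
    (hc2 : ∀ n, (Even n ↔ pl = true) → n ≤ N → x (n+1) = ap s (x n) ∅ ∅ false)
    (hc3 : (Even N ↔ pl = true) → (s.1 (tr (x N) ∅ ∅ false (V.triv (hx.len N).le))).S = S)
    (hc4 : (Even (N+1) ↔ pl = true) → ∀ h, (s.1 (tr (x (N+1)) S ∅ false h)).R = {q | Cmp (x m0) q} ∧
      (s.1 (tr (x (N+1)) S ∅ false h)).b = true) :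
    ∃ y, (BT T N E hN).IsPlay y ∧ (BT T N E hN).Cons pl s y ∧ ∀ n, BPos.p (y n) = x n := by
  have hV : ∀ n, V T N E (x n) S {q | Cmp (x m0) q} true := fun n =>
    V_play hx n (fun _ => ⟨hS, hxS⟩) (fun _ => ⟨fun m _ _ => cmp_play hx m0 m,
      Or.inl ⟨rfl, _, huS, huE, by rwa [hx.len], rfl⟩⟩)
  refine lift_gen hx hV pl s ?_
  intro n hn
  have hlow : ∀ (h : n ≤ N), tr (x n) S {q | Cmp (x m0) q} true (hV n) =
      tr (x n) ∅ ∅ false (V.triv ((hx.len n).le.trans h)) := fun h => tr_congr _ _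
        (fun h' => by rw [hx.len] at h'; omega) (fun h' => by rw [hx.len] at h'; omega)
  refine ⟨?_, ?_, ?_⟩
  · rcases Nat.lt_or_ge N n with h1 | h1
    · rcases Nat.lt_or_ge n m0 with h2 | h2
      · -- forced move
        have hR : (s.1 (tr (x n) S {q | Cmp (x m0) q} true (hV n))).R = {q | Cmp (x m0) q} := by
          rcases Nat.lt_or_ge (N+1) n with h3 | h3
          · exact (bchild_R (s.2 _) (by rwa [hx.len])).1
          · obtain rfl : n = N + 1 := by omega
            have h5 : tr (x (N+1)) S {q | Cmp (x m0) q} true (hV (N+1)) =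
              tr (x (N+1)) S ∅ false (V_play hx _ (fun _ => ⟨hS, hxS⟩) (fun _ => by omega)) :=
              tr_congr _ _ (fun _ => rfl) (fun h' => by rw [hx.len] at h'; omega)
            rw [h5]
            exact (hc4 hn _).1
        have hl : T.len (s.1 (tr (x n) S {q | Cmp (x m0) q} true (hV n))).p = n + 1 := by
          rw [(bchild (s.2 (tr (x n) S {q | Cmp (x m0) q} true (hV n)))).2]
          exact congrArg (· + 1) (hx.len n)
        have hmem := ((s.1 (tr (x n) S {q | Cmp (x m0) q} true (hV n))).v.2 (by omega)).1 (n+1)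
          (by omega) hl.ge
        rw [anc_self _ hl.le, hR] at hmem
        have := cmp_le hmem (by rw [hl, hx.len]; omega)
        rw [this, hl, hx.anc (by omega)]
      · rw [hc1 n hn h2, ap_eq s (hV n)]
    · rw [hc2 n hn h1, ap_eq s (V.triv ((hx.len n).le.trans h1)), hlow h1]
  · rintro rfl
    rw [hlow le_rfl]; exact hc3 hn
  · rintro rfl
    have h5 : tr (x (N+1)) S {q | Cmp (x m0) q} true (hV (N+1)) =
      tr (x (N+1)) S ∅ false (V_play hx _ (fun _ => ⟨hS, hxS⟩) (fun _ => by omega)) :=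
      tr_congr _ _ (fun _ => rfl) (fun h' => by rw [hx.len] at h'; omega)
    rw [h5]
    exact hc4 hn _

/-! #### Player I -/

noncomputable def SI {hN : Even N} (s : (BT T N E hN).Strat) (q : T.P) : Set T.P :=
  if h : V T N E q ∅ ∅ false then (s.1 (tr q ∅ ∅ false h)).S else ∅

noncomputable def aI (E S : Set T.P) :
    Att (fun p c => T.Child p c ∧ c ∈ S) (fun p => Even (T.len p)) E := att _ _ _

noncomputable def coreI (N : ℕ) (E : Set T.P) (apf : Set T.P → Set T.P → Bool → T.P) (S : Set T.P)
    (p : T.P) : T.P :=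
  core N apf (S ∩ E) (aI E S).Z (aI E S).f (fun _ => S) S (S \ (aI E S).Z) p

noncomputable def phiI {hN : Even N} (s : (BT T N E hN).Strat) : T.Strat :=
  ⟨fun p => if T.len p ≤ N then ap s p ∅ ∅ false else coreI N E (ap s p) (SI s (T.anc p N)) p, by
    intro p
    dsimp only
    split_ifs
    · exact ap_child _ _ _ _ _
    · exact core_child (ap_child s p)⟩

theorem phiI_loc {hN : Even N} {s s' : (BT T N E hN).Strat} {n : ℕ}
    (h : ∀ p, (BT T N E hN).len p < n → s.1 p = s'.1 p) (p : T.P) (hp : T.len p < n) :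
    (phiI s).1 p = (phiI s').1 p := by
  unfold phiI
  dsimp only
  split_ifs with h1
  · rw [ap_loc h hp]
  · have : SI s (T.anc p N) = SI s' (T.anc p N) := by
      unfold SI
      split_ifs with hv
      · rw [h (tr (T.anc p N) ∅ ∅ false hv) (by
          change T.len (T.anc p N) < n
          rw [len_anc p (by omega)]; omega)]
      · rfl
    rw [ap_loc h hp, this]

theorem phiI_lift {hN : Even N} (s : (BT T N E hN).Strat) (x : ℕ → T.P) (hx : T.IsPlay x)
    (hc : T.Cons true (phiI s) x) :
    ∃ y, (BT T N E hN).IsPlay y ∧ (BT T N E hN).Cons true s y ∧ ∀ n, BPos.p (y n) = x n := by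
  have hlow : ∀ n, (Even n ↔ true = true) → n ≤ N → x (n+1) = ap s (x n) ∅ ∅ false := by
    intro n hn h
    rw [hc n hn]
    simp only [phiI]
    rw [if_pos (by rwa [hx.len])]
  have hVN : V T N E (x N) ∅ ∅ false := V.triv (hx.len N).le
  obtain ⟨S, hSdef⟩ : ∃ S, S = (s.1 (tr (x N) ∅ ∅ false hVN)).S := ⟨_, rfl⟩
  have hhigh : ∀ n, (Even n ↔ true = true) → N < n → x (n+1) = coreI N E (ap s (x n)) S (x n) := by
    intro n hn h
    rw [hc n hn]
    simp only [phiI]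
    rw [if_neg (by rw [hx.len]; omega), hx.anc h.le]
    simp only [SI]
    rw [dif_pos hVN, hSdef]
  have hN1 := hlow N (by simpa using hN) le_rfl
  rw [ap_eq s hVN] at hN1
  have hSv : QI T S ∧ x (N+1) ∈ S := by
    have hl : T.len (x (N+1)) = N + 1 := hx.len _
    rw [hN1] at hl
    have := (s.1 (tr (x N) ∅ ∅ false hVN)).v.1 (by omega)
    rw [anc_self _ (by omega), ← hN1, ← hSdef] at this
    exact this
  by_cases hhit : ∃ m, N + 2 ≤ m ∧ x m ∈ S ∩ E
  · have hm := Nat.find_spec hhit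
    have hmin := fun m => Nat.find_min (H := hhit) (m := m)
    generalize Nat.find hhit = m0 at hm hmin
    refine lift_hit hx hm.1 hSv.1 hSv.2 hm.2.1 hm.2.2 true s ?_ hlow (fun _ => hSdef.symm) ?_
    · intro n hn hmn
      rw [hhigh n hn (by omega), coreI, core_hit hx hm.1 hm.2 (fun m h1 h2 h3 => hmin m h2 ⟨h1, h3⟩) hmn]
    · intro h
      have h6 : Even (N+1) := h.2 rfl
      exact absurd hN (by simpa [Nat.even_add_one] using h6)
  · have hno : ∀ m, N + 2 ≤ m → x m ∉ S ∩ E := fun m h1 h2 => hhit ⟨m, h1, h2⟩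
    obtain ⟨Z, hZ⟩ : ∃ Z, Z = (aI E S).Z := ⟨_, rfl⟩
    have hhigh2 : ∀ n, (Even n ↔ true = true) → N < n → x (n+1) =
        if x n ∈ Z ∧ T.Child (x n) ((aI E S).f (x n)) then (aI E S).f (x n)
        else ap s (x n) S (S \ Z) false := by
      intro n hn h
      rw [hhigh n hn h, coreI, core_nohit hx hno, hZ]
    have hrank : ∀ n, N + 2 ≤ n → x n ∈ S → x n ∉ Z := by
      intro n hn hnS hnZ
      refine rank_absurd (aI E S).rk x (fun n => N + 2 ≤ n ∧ x n ∈ S ∧ x n ∈ Z) ?_ n ⟨hn, hnS, hnZ⟩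
      rintro n ⟨h1, h2, h3⟩
      have hE : x n ∉ E := fun h => hno n h1 ⟨h2, h⟩
      by_cases he : Even n
      · have h4 := (aI E S).zown (x n) (hZ ▸ h3) hE (by rwa [hx.len])
        have h5 := hhigh2 n (by simpa using he) (by omega)
        rw [if_pos ⟨h3, h4.1.1⟩] at h5
        rw [h5]
        exact ⟨⟨by omega, h4.1.2, hZ ▸ h4.2.1⟩, h4.2.2⟩
      · have hS1 := (hSv.1 _ h2).2 (by rwa [hx.len]) _ (hx.2 n)
        have h4 := (aI E S).zopp (x n) (hZ ▸ h3) hE (by rwa [hx.len]) _ ⟨hx.2 n, hS1⟩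
        exact ⟨⟨by omega, hS1, hZ ▸ h4.1⟩, h4.2⟩
    have hQ : QII T E S (S \ Z) := by
      refine ⟨fun q h => h.1, fun q h hE => h.2 (hZ ▸ (aI E S).base q hE), fun q h => ⟨?_, ?_⟩⟩
      · intro he c hcS hqc
        exact ⟨hcS, hZ ▸ (aI E S).nown q (hZ ▸ h.2) he c ⟨hqc, hcS⟩⟩
      · intro he
        obtain ⟨c, h1, h2⟩ := (aI E S).nopp q (hZ ▸ h.2) he
        exact ⟨c, ⟨h1.2, hZ ▸ h2⟩, h1.1⟩
    have hmem : ∀ n, ∀ m, N + 2 ≤ m → m ≤ n → x m ∈ S \ Z := by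
      intro n
      induction n with
      | zero => intro m h1 h2; omega
      | succ n ih =>
        intro m h1 h2
        rcases Nat.lt_or_ge n m with h3 | h3
        · obtain rfl : m = n + 1 := by omega
          have hnS : x n ∈ S := by
            rcases Nat.lt_or_ge (N+1) n with h4 | h4
            · exact (ih n h4 le_rfl).1
            · obtain rfl : n = N + 1 := by omega
              exact hSv.2
          by_cases he : Even n
          · have hn2 : N + 2 ≤ n := by
              rcases Nat.lt_or_ge (N+1) n with h4 | h4
              · exact h4
              · obtain rfl : n = N + 1 := by omega
                exact absurd hN (by simpa [Nat.even_add_one] using he)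
            have h5 := hhigh2 n (by simpa using he) (by omega)
            have hVn : V T N E (x n) S (S \ Z) false := V_play hx n (fun _ => hSv)
              (fun _ => ⟨ih, Or.inr ⟨rfl, hQ⟩⟩)
            rw [if_neg (fun h => (ih n hn2 le_rfl).2 h.1), ap_eq s hVn] at h5
            -- the chosen move stays in `R`
            have hl : T.len (x (n+1)) = n + 1 := hx.len _
            rw [h5] at hl ⊢
            have hR := (bchild_R (s.2 (tr (x n) S (S \ Z) false hVn)) (by rwa [hx.len])).1
            have hv := (s.1 (tr (x n) S (S \ Z) false hVn)).mem_R (by omega)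
            rwa [hR] at hv
          · have h5 := (hSv.1 _ hnS).2 (by rwa [hx.len]) _ (hx.2 n)
            exact ⟨h5, hrank _ h1 h5⟩
        · exact ih m h1 h3
    have hV : ∀ n, V T N E (x n) S (S \ Z) false := fun n => V_play hx n (fun _ => hSv)
      (fun _ => ⟨hmem n, Or.inr ⟨rfl, hQ⟩⟩)
    refine lift_gen hx hV true s ?_
    intro n hn
    have hlow' : ∀ (h : n ≤ N), tr (x n) S (S \ Z) false (hV n) =
      tr (x n) ∅ ∅ false (V.triv ((hx.len n).le.trans h)) := fun h => tr_congr _ _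
        (fun h' => by rw [hx.len] at h'; omega) (fun h' => by rw [hx.len] at h'; omega)
    refine ⟨?_, ?_, ?_⟩
    · rcases Nat.lt_or_ge N n with h1 | h1
      · have hn2 : N + 2 ≤ n := by
          rcases Nat.lt_or_ge (N+1) n with h4 | h4
          · exact h4
          · obtain rfl : n = N + 1 := by omega
            have h6 : Even (N+1) := hn.2 rfl
            exact absurd hN (by simpa [Nat.even_add_one] using h6)
        have h5 := hhigh2 n hn h1
        rw [if_neg (fun h => (hmem n n hn2 le_rfl).2 h.1), ap_eq s (hV n)] at h5
        exact h5.symm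
      · rw [hlow n hn h1, ap_eq s (V.triv ((hx.len n).le.trans h1)), hlow' h1]
    · rintro rfl
      rw [hlow' le_rfl, hSdef]
    · rintro rfl
      have h6 : Even (N+1) := hn.2 rfl
      exact absurd hN (by simpa [Nat.even_add_one] using h6)

/-! #### Player II -/

noncomputable def respII {hN : Even N} (s : (BT T N E hN).Strat) (q : T.P) (S : Set T.P) :
    Set T.P × Bool :=
  if h : V T N E q S ∅ false then
    ((s.1 (tr q S ∅ false h)).R, (s.1 (tr q S ∅ false h)).b) else (∅, false)

def GoodII (N : ℕ) (E : Set T.P) (rsp : Set T.P → Set T.P × Bool) (q u : T.P) (S : Set T.P) : Prop :=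
  QI T S ∧ q ∈ S ∧ u ∈ S ∧ u ∈ E ∧ N + 2 ≤ T.len u ∧ rsp S = ({r | Cmp u r}, true)

def UII (N : ℕ) (E : Set T.P) (rsp : Set T.P → Set T.P × Bool) (q : T.P) : Set T.P :=
  {u | ∃ S, GoodII N E rsp q u S}

noncomputable def SofII (N : ℕ) (E : Set T.P) (rsp : Set T.P → Set T.P × Bool) (q u : T.P) : Set T.P :=
  if h : ∃ S, GoodII N E rsp q u S then h.choose else ∅

noncomputable def aII (U : Set T.P) : Att T.Child (fun p => ¬ Even (T.len p)) U := att _ _ _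

noncomputable def coreII (N : ℕ) (E : Set T.P) (apf : Set T.P → Set T.P → Bool → T.P)
    (rsp : Set T.P → Set T.P × Bool) (q p : T.P) : T.P :=
  core N apf (UII N E rsp q) (aII (UII N E rsp q)).Z (aII (UII N E rsp q)).f (SofII N E rsp q)
    (aII (UII N E rsp q)).Zᶜ (rsp (aII (UII N E rsp q)).Zᶜ).1 p

noncomputable def phiII {hN : Even N} (s : (BT T N E hN).Strat) : T.Strat :=
  ⟨fun p => if T.len p ≤ N then ap s p ∅ ∅ false else
    coreII N E (ap s p) (respII s (T.anc p (N+1))) (T.anc p (N+1)) p, by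
    intro p
    dsimp only
    split_ifs
    · exact ap_child _ _ _ _ _
    · exact core_child (ap_child s p)⟩

theorem phiII_loc {hN : Even N} {s s' : (BT T N E hN).Strat} {n : ℕ}
    (h : ∀ p, (BT T N E hN).len p < n → s.1 p = s'.1 p) (p : T.P) (hp : T.len p < n) :
    (phiII s).1 p = (phiII s').1 p := by
  unfold phiII
  dsimp only
  split_ifs with h1
  · rw [ap_loc h hp]
  · have : respII s (T.anc p (N+1)) = respII s' (T.anc p (N+1)) := by
      funext S
      unfold respII
      split_ifs with hv
      · rw [h (tr (T.anc p (N+1)) S ∅ false hv) (by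
          change T.len (T.anc p (N+1)) < n
          rw [len_anc p (by omega)]; omega)]
      · rfl
    rw [ap_loc h hp, this]

theorem phiII_lift {hN : Even N} (s : (BT T N E hN).Strat) (x : ℕ → T.P) (hx : T.IsPlay x)
    (hc : T.Cons false (phiII s) x) :
    ∃ y, (BT T N E hN).IsPlay y ∧ (BT T N E hN).Cons false s y ∧ ∀ n, BPos.p (y n) = x n := by
  have hodd : ¬ Even (N+1) := by simpa [Nat.even_add_one] using hN
  have hlow : ∀ n, (Even n ↔ false = true) → n ≤ N → x (n+1) = ap s (x n) ∅ ∅ false := by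
    intro n hn h
    rw [hc n hn]
    simp only [phiII]
    rw [if_pos (by rwa [hx.len])]
  obtain ⟨rsp, hrsp⟩ : ∃ r, r = respII s (x (N+1)) := ⟨_, rfl⟩
  have hhigh : ∀ n, (Even n ↔ false = true) → N < n →
      x (n+1) = coreII N E (ap s (x n)) rsp (x (N+1)) (x n) := by
    intro n hn h
    rw [hc n hn]
    simp only [phiII]
    rw [if_neg (by rw [hx.len]; omega), hx.anc h, hrsp]
  obtain ⟨U, hU⟩ : ∃ U, U = UII N E rsp (x (N+1)) := ⟨_, rfl⟩
  have hVS : ∀ S, QI T S → x (N+1) ∈ S → V T N E (x (N+1)) S ∅ false := fun S h1 h2 =>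
    V_play hx _ (fun _ => ⟨h1, h2⟩) (fun _ => by omega)
  by_cases hhit : ∃ m, N + 2 ≤ m ∧ x m ∈ U
  · have hm := Nat.find_spec hhit
    have hmin := fun m => Nat.find_min (H := hhit) (m := m)
    generalize Nat.find hhit = m0 at hm hmin
    have hex : ∃ S, GoodII N E rsp (x (N+1)) (x m0) S := by
      have := hm.2; rw [hU] at this; exact this
    obtain ⟨S, hS⟩ : ∃ S, S = SofII N E rsp (x (N+1)) (x m0) := ⟨_, rfl⟩
    have hG : GoodII N E rsp (x (N+1)) (x m0) S := by
      rw [hS, SofII, dif_pos hex]; exact hex.choose_spec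
    obtain ⟨g1, g2, g3, g4, g5, g6⟩ := hG
    refine lift_hit hx hm.1 g1 g2 g3 g4 false s ?_ hlow (fun h => absurd (h.1 hN) (by simp)) ?_
    · intro n hn hmn
      rw [hhigh n hn (by omega), coreII, ← hU,
        core_hit hx hm.1 hm.2 (fun m h1 h2 h3 => hmin m h2 ⟨h1, h3⟩) hmn, hS]
    · intro _ h
      rw [hrsp, respII, dif_pos h] at g6
      exact ⟨congrArg Prod.fst g6, congrArg Prod.snd g6⟩
  · have hno : ∀ m, N + 2 ≤ m → x m ∉ U := fun m h1 h2 => hhit ⟨m, h1, h2⟩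
    have hno' : ∀ m, N < m → x m ∉ U := by
      intro m h1 h2
      rcases Nat.lt_or_ge (N+1) m with h3 | h3
      · exact hno m h3 h2
      · rw [hU] at h2
        obtain ⟨S, _, _, _, _, h4, _⟩ := h2
        rw [hx.len] at h4; omega
    obtain ⟨Z, hZ⟩ : ∃ Z, Z = (aII U).Z := ⟨_, rfl⟩
    have hhigh2 : ∀ n, (Even n ↔ false = true) → N < n → x (n+1) =
        if x n ∈ Z ∧ T.Child (x n) ((aII U).f (x n)) then (aII U).f (x n)
        else ap s (x n) Zᶜ (rsp Zᶜ).1 false := by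
      intro n hn h
      rw [hhigh n hn h, coreII, ← hU, core_nohit hx hno, hZ]
    have hrank : ∀ n, N < n → x n ∉ Z := by
      intro n hn hnZ
      refine rank_absurd (aII U).rk x (fun n => N < n ∧ x n ∈ Z) ?_ n ⟨hn, hnZ⟩
      rintro n ⟨h1, h3⟩
      have hE : x n ∉ U := hno' n h1
      by_cases he : Even n
      · have h4 := (aII U).zopp (x n) (hZ ▸ h3) hE (by rw [hx.len]; exact not_not.2 he) _ (hx.2 n)
        exact ⟨⟨by omega, hZ ▸ h4.1⟩, h4.2⟩
      · have h4 := (aII U).zown (x n) (hZ ▸ h3) hE (by rwa [hx.len])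
        have h5 := hhigh2 n (by simpa using he) (by omega)
        rw [if_pos ⟨h3, h4.1⟩] at h5
        rw [h5]
        exact ⟨⟨by omega, hZ ▸ h4.2.1⟩, h4.2.2⟩
    have hQI : QI T Zᶜ := by
      intro q hq
      constructor
      · intro he
        obtain ⟨c, h1, h2⟩ := (aII U).nopp q (hZ ▸ hq) (not_not.2 he)
        exact ⟨c, hZ ▸ h2, h1⟩
      · intro he c hqc
        have := (aII U).nown q (hZ ▸ hq) he c hqc
        rw [hZ]; exact this
    have hmS : x (N+1) ∈ Zᶜ := hrank (N+1) (by omega)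
    have hV1 := hVS _ hQI hmS
    obtain ⟨z, hz⟩ : ∃ z, z = s.1 (tr (x (N+1)) Zᶜ ∅ false hV1) := ⟨_, rfl⟩
    have hzch : (BT T N E hN).Child (tr (x (N+1)) Zᶜ ∅ false hV1) z := hz ▸ s.2 _
    have hzl : T.len z.p = N + 2 := by
      rw [(bchild hzch).2]; exact congrArg (· + 1) (hx.len (N+1))
    have hzS : z.S = Zᶜ := bchild_S hzch (by rw [hx.len]; omega)
    have hrz : rsp Zᶜ = (z.R, z.b) := by
      rw [hrsp, respII, dif_pos hV1, hz]
    have hQ : z.b = false ∧ QII T E Zᶜ z.R := by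
      rcases (z.v.2 (by omega)).2 with ⟨hb, u, h1, h2, h3, h4⟩ | h
      · exfalso
        rw [hzS] at h1
        apply h1
        rw [hZ]
        apply (aII U).base
        rw [hU]
        refine ⟨Zᶜ, hQI, hmS, h1, h2, h3, ?_⟩
        rw [hrz, h4, hb]
      · rwa [hzS] at h
    rw [hrz] at hhigh2
    obtain ⟨R, hR⟩ : ∃ R, R = z.R := ⟨_, rfl⟩
    rw [← hR] at hQ
    simp only [← hR] at hhigh2
    have hhigh3 : ∀ n, (Even n ↔ false = true) → N < n → x (n+1) = ap s (x n) Zᶜ R false := by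
      intro n hn h
      rw [hhigh2 n hn h, if_neg (fun h' => hrank n h h'.1)]
    have htr1 : ∀ h, tr (x (N+1)) Zᶜ R false h = tr (x (N+1)) Zᶜ ∅ false hV1 := fun h =>
      tr_congr _ _ (fun _ => rfl) (fun h' => by rw [hx.len] at h'; omega)
    have hmem : ∀ n, ∀ m, N + 2 ≤ m → m ≤ n → x m ∈ R := by
      intro n
      induction n with
      | zero => intro m h1 h2; omega
      | succ n ih =>
        intro m h1 h2
        rcases Nat.lt_or_ge n m with h3 | h3
        · obtain rfl : m = n + 1 := by omega
          have hVn : V T N E (x n) Zᶜ R false := V_play hx n (fun _ => ⟨hQI, hmS⟩)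
              (fun _ => ⟨ih, Or.inr ⟨rfl, hQ.2⟩⟩)
          by_cases he : Even n
          · have hn2 : N + 2 ≤ n := by
              rcases Nat.lt_or_ge (N+1) n with h4 | h4
              · exact h4
              · obtain rfl : n = N + 1 := by omega
                exact absurd he hodd
            exact (hQ.2.2.2 _ (ih n hn2 le_rfl)).1 (by rwa [hx.len]) _
              (hrank (n+1) (by omega)) (hx.2 n)
          · have h5 := hhigh3 n (by simpa using he) (by omega)
            rw [ap_eq s hVn] at h5
            have hl : T.len (x (n+1)) = n + 1 := hx.len _
            rw [h5] at hl ⊢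
            have hv := (s.1 (tr (x n) Zᶜ R false hVn)).mem_R (by omega)
            rcases Nat.lt_or_ge (N+1) n with h4 | h4
            · have hR := (bchild_R (s.2 (tr (x n) Zᶜ R false hVn)) (by rwa [hx.len])).1
              rwa [hR] at hv
            · obtain rfl : n = N + 1 := by omega
              rw [htr1, ← hz] at hv ⊢
              rwa [hR]
        · exact ih m h1 h3
    have hV : ∀ n, V T N E (x n) Zᶜ R false := fun n => V_play hx n (fun _ => ⟨hQI, hmS⟩)
      (fun _ => ⟨hmem n, Or.inr ⟨rfl, hQ.2⟩⟩)
    refine lift_gen hx hV false s ?_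
    intro n hn
    refine ⟨?_, ?_, ?_⟩
    · rcases Nat.lt_or_ge N n with h1 | h1
      · rw [hhigh3 n hn h1, ap_eq s (hV n)]
      · have hlow' : tr (x n) Zᶜ R false (hV n) =
          tr (x n) ∅ ∅ false (V.triv ((hx.len n).le.trans h1)) := tr_congr _ _
            (fun h' => by rw [hx.len] at h'; omega) (fun h' => by rw [hx.len] at h'; omega)
        rw [hlow n hn h1, ap_eq s (V.triv ((hx.len n).le.trans h1)), hlow']
    · rintro rfl
      exact absurd (hn.1 hN) (by simp)
    · rintro rfl
      rw [htr1, ← hz]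
      exact ⟨hR.symm, hQ.1⟩

/-- The unraveling covering. -/
noncomputable def bcov {hN : Even N} {k : ℕ} (hk : k ≤ N) : Cov k (BT T N E hN) T where
  π := BPos.p
  len_π _ := rfl
  par_π _ := rfl
  inj x y hx hy h := by
    have hx' : T.len x.p ≤ k := hx
    have hy' : T.len y.p ≤ k := hy
    apply BPos.ext h
    · rw [x.h1 (by omega), y.h1 (by omega)]
    · rw [x.h2 (by omega), y.h2 (by omega)]
    · rw [x.h3 (by omega), y.h3 (by omega)]
  surj p hp := ⟨tr p ∅ ∅ false (V.triv (by omega)), rfl⟩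
  φ b s := if b = true then phiI s else phiII s
  loc b s s' n h p hp := by
    split_ifs
    · exact phiI_loc h p hp
    · exact phiII_loc h p hp
  idk b s x hx := by
    have hx' : T.len x.p < k := hx
    have h0 : ∀ h, tr x.p ∅ ∅ false h = x := fun h => by
      conv_rhs => rw [← tr_self x]
      exact tr_congr _ _ (fun _ => by omega) (fun _ => by omega)
    have h1 : ap s x.p ∅ ∅ false = (s.1 x).p := by
      rw [ap_eq s (V.triv (by omega)), h0]
    split_ifs
    · simp only [phiI]
      rw [if_pos (by omega), h1]
    · simp only [phiII]
      rw [if_pos (by omega), h1]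
  lift b s x hx hc := by
    split_ifs at hc with hb
    · subst hb; exact phiI_lift s x hx hc
    · obtain rfl : b = false := by simpa using hb
      exact phiII_lift s x hx hc

end Base

theorem unravel_open (T : GTree.{u}) (O : Set (ℕ → T.P)) (hO : T.Opn O) (k : ℕ) :
    ∃ (S : GTree.{u}) (c : Cov k S T), S.Clopen {y | (fun n => c.π (y n)) ∈ O} := by
  let E : Set T.P := {p | ∀ y, T.IsPlay y → y (T.len p) = p → y ∈ O}
  have hN : Even (2 * k) := even_two_mul k
  refine ⟨Base.BT T (2*k) E hN, Base.bcov (by omega), ?_⟩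
  set N := 2 * k
  have hkey : ∀ y, (Base.BT T N E hN).IsPlay y →
      ((fun n => (Base.bcov (E := E) (hN := hN) (show k ≤ N by omega)).π (y n)) ∈ O ↔
        Base.BPos.b (y (N+2)) = true) := by
    intro y hy
    have hx := (Base.bcov (E := E) (hN := hN) (show k ≤ N by omega)).play hy
    set x : ℕ → T.P := fun n => (Base.bcov (E := E) (hN := hN) (show k ≤ N by omega)).π (y n) with hxd
    have hxy : ∀ n, x n = Base.BPos.p (y n) := fun n => rfl
    have hconst : ∀ j, Base.BPos.R (y (N+2+j)) = Base.BPos.R (y (N+2)) := by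
      intro j
      induction j with
      | zero => rfl
      | succ j ih =>
        rw [← ih]
        have hc := hy.2 (N+2+j)
        rw [← Base.tr_self (y (N+2+j))] at hc
        refine (Base.bchild_R hc ?_).1
        have := hx.len (N+2+j)
        rw [hxy] at this
        omega
    have hmem : ∀ n, N + 2 ≤ n → x n ∈ Base.BPos.R (y (N+2)) := by
      intro n hn
      obtain ⟨j, rfl⟩ := Nat.exists_eq_add_of_le hn
      rw [← hconst j, hxy]
      apply Base.BPos.mem_R
      have := hx.len (N+2+j)
      rw [hxy] at this
      omega
    have hl := hx.len (N+2)
    rw [hxy] at hl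
    rcases ((y (N+2) : Base.BPos T N E).v.2 (by omega)).2 with ⟨hb, u, h1, h2, h3, h4⟩ | ⟨hb, hQ⟩
    · refine iff_of_true ?_ hb
      have h5 := hmem _ h3
      rw [h4] at h5
      have h6 := GTree.cmp_le h5 (hx.len _).le
      rw [hx.len, GTree.anc_self _ le_rfl] at h6
      exact h2 x hx h6
    · refine iff_of_false ?_ (by rw [hb]; simp)
      intro hxO
      obtain ⟨n, hn⟩ := hO x hx hxO
      refine hQ.2.1 _ (hmem (N+2+n) (by omega)) ?_
      intro w hw hwx
      rw [hx.len] at hwx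
      apply hn w hw
      rw [← hw.anc (show n ≤ N+2+n by omega), hwx, hx.anc (by omega)]
  intro y hy
  refine ⟨N+2, fun z hz hzy => ?_⟩
  have h1 := hkey y hy
  have h2 := hkey z hz
  rw [hzy] at h2
  exact h2.trans h1.symm

/-! ### Inverse limits of coverings -/

namespace Lim

def LP (T : ℕ → GTree.{u}) (κ : ℕ → ℕ) (c : ∀ i, Cov (κ i) (T (i+1)) (T i)) : Type u :=
  {x : ∀ i, (T i).P // ∀ i, (c i).π (x (i+1)) = x i}

theorem ex0 (T : ℕ → GTree.{u}) (κ : ℕ → ℕ) (hκ : ∀ i, κ i < κ (i+1))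
    (c : ∀ i, Cov (κ i) (T (i+1)) (T i)) (p : (T 0).P) (h : (T 0).len p ≤ κ 0) :
    ∃ x : LP T κ c, x.1 0 = p := by
  have key : ∀ i (q : {q : (T i).P // (T i).len q ≤ κ i}),
      ∃ r : {r : (T (i+1)).P // (T (i+1)).len r ≤ κ (i+1)}, (c i).π r.1 = q.1 := by
    intro i q
    obtain ⟨r, hr⟩ := (c i).surj q.1 q.2
    refine ⟨⟨r, ?_⟩, hr⟩
    have h1 := (c i).len_π r
    rw [hr] at h1
    have h2 := q.2
    have h3 := hκ i
    omega
  choose f hf using key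
  let y : ∀ i, {q : (T i).P // (T i).len q ≤ κ i} := fun i =>
    Nat.rec (motive := fun i => {q : (T i).P // (T i).len q ≤ κ i}) ⟨p, h⟩ (fun i q => f i q) i
  exact ⟨⟨fun i => (y i).1, fun i => hf i (y i)⟩, rfl⟩

theorem exj (j : ℕ) : ∀ (T : ℕ → GTree.{u}) (κ : ℕ → ℕ) (_ : ∀ i, κ i < κ (i+1))
    (c : ∀ i, Cov (κ i) (T (i+1)) (T i)) (p : (T j).P) (_ : (T j).len p ≤ κ j),
    ∃ x : LP T κ c, x.1 j = p := by
  induction j with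
  | zero => exact fun T κ hκ c p h => ex0 T κ hκ c p h
  | succ j ih =>
    intro T κ hκ c p h
    obtain ⟨x, hx⟩ := ih (fun i => T (i+1)) (fun i => κ (i+1)) (fun i => hκ (i+1))
      (fun i => c (i+1)) p h
    refine ⟨⟨fun i => Nat.casesOn (motive := fun i => (T i).P) i ((c 0).π (x.1 0)) x.1, ?_⟩, hx⟩
    intro i
    cases i with
    | zero => rfl
    | succ i => exact x.2 i

variable {T : ℕ → GTree.{u}} {κ : ℕ → ℕ} {c : ∀ i, Cov (κ i) (T (i+1)) (T i)}

theorem len_eq (x : LP T κ c) (i : ℕ) : (T i).len (x.1 i) = (T 0).len (x.1 0) := by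
  induction i with
  | zero => rfl
  | succ i ih => rw [← ih, ← x.2 i, (c i).len_π]

theorem uniq (hκ : ∀ i, κ i < κ (i+1)) (x y : LP T κ c) (j : ℕ) (h : x.1 j = y.1 j)
    (hl : (T j).len (x.1 j) ≤ κ j) : x = y := by
  have hm : StrictMono κ := strictMono_nat_of_lt_succ hκ
  have hup : ∀ i, j ≤ i → x.1 i = y.1 i := by
    intro i hi
    induction i, hi using Nat.le_induction with
    | base => exact h
    | succ i hi ih =>
      have h1 := hm.monotone hi
      have h0 := len_eq x j
      have h0' := len_eq x (i+1)
      have h2 := (c i).len_π (x.1 (i+1))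
      have h3 := (c i).len_π (y.1 (i+1))
      rw [x.2] at h2
      rw [y.2] at h3
      rw [ih] at h2
      refine (c i).inj _ _ (by omega) (by omega) ?_
      rw [x.2, y.2, ih]
  have hdn : ∀ d i, i + d = j → x.1 i = y.1 i := by
    intro d
    induction d with
    | zero => rintro i rfl; exact h
    | succ d ih =>
      intro i hi
      rw [← x.2, ← y.2, ih (i+1) (by omega)]
  apply Subtype.ext
  funext i
  rcases le_total j i with h1 | h1
  · exact hup i h1
  · exact hdn (j - i) i (by omega)

theorem le_k (hκ : ∀ i, κ i < κ (i+1)) (i : ℕ) : i ≤ κ i :=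
  (strictMono_nat_of_lt_succ hκ).le_apply

def LT (T : ℕ → GTree.{u}) (κ : ℕ → ℕ) (hκ : ∀ i, κ i < κ (i+1))
    (c : ∀ i, Cov (κ i) (T (i+1)) (T i)) : GTree.{u} where
  P := LP T κ c
  len x := (T 0).len (x.1 0)
  par x := ⟨fun i => (T i).par (x.1 i), fun i => by rw [← (c i).par_π, x.2]⟩
  root := ⟨fun i => (T i).root, fun i => (c i).root⟩
  len_root := (T 0).len_root
  eq_root x hx := Subtype.ext (funext fun i => (T i).eq_root _ (by rw [len_eq, hx]))
  len_par x := (T 0).len_par _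
  ext x := by
    set n := (T 0).len (x.1 0) with hn
    have h1 := (T (n+1)).dflt_child (x.1 (n+1))
    have hl := len_eq x (n+1)
    have hk := le_k hκ (n+1)
    have h2 : (T (n+1)).len ((T (n+1)).dflt (x.1 (n+1))) = n + 1 := by rw [h1.2, hl]
    obtain ⟨y, hy⟩ := exj (n+1) T κ hκ c _ (h2.le.trans hk)
    refine ⟨y, ?_, ?_⟩
    · apply uniq hκ _ _ (n+1)
      · change (T (n+1)).par (y.1 (n+1)) = _
        rw [hy, h1.1]
      · change (T (n+1)).len ((T (n+1)).par (y.1 (n+1))) ≤ _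
        rw [hy, h1.1]; omega
    · rw [← len_eq y (n+1), hy, h2]

variable {hκ : ∀ i, κ i < κ (i+1)}

open Classical in
noncomputable def base (s : (LT T κ hκ c).Strat) (j : ℕ) : (T j).Strat :=
  ⟨fun p => if h : (T j).len p ≤ κ j then
      (s.1 (exj j T κ hκ c p h).choose).1 j else (T j).dflt p, by
    intro p
    dsimp only
    split_ifs with h
    · have h1 := (exj j T κ hκ c p h).choose_spec
      have h2 := s.2 (exj j T κ hκ c p h).choose
      set X := (exj j T κ hκ c p h).choose
      have h3 := h2.1
      have h4 : (T 0).len ((s.1 X).1 0) = (T 0).len (X.1 0) + 1 := h2.2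
      refine ⟨?_, ?_⟩
      · rw [← h1]
        exact congrFun (congrArg Subtype.val h3) j
      · exact (len_eq (s.1 X) j).trans (by rw [h4, ← h1, len_eq X j])
    · exact (T j).dflt_child p⟩

theorem base_at (s : (LT T κ hκ c).Strat) (j : ℕ) (X : LP T κ c)
    (h : (T j).len (X.1 j) ≤ κ j) : (base s j).1 (X.1 j) = (s.1 X).1 j := by
  have h1 := (exj j T κ hκ c (X.1 j) h).choose_spec
  have h2 := uniq hκ _ X j h1 (by rw [h1]; exact h)
  simp only [base, dif_pos h]
  rw [h2]

noncomputable def tau (b : Bool) (s : (LT T κ hκ c).Strat) : ℕ → ∀ i, (T i).Strat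
  | 0, i => base s i
  | d+1, i => (c i).φ b (tau b s d (i+1))

theorem tau_succ (b : Bool) (s : (LT T κ hκ c).Strat) (d : ℕ) : ∀ i (p : (T i).P),
    (T i).len p < κ (i+d) → (tau b s (d+1) i).1 p = (tau b s d i).1 p := by
  induction d with
  | zero =>
    intro i p hp
    obtain ⟨X, rfl⟩ := exj i T κ hκ c p hp.le
    have hl1 := len_eq X i
    have hl2 := len_eq X (i+1)
    have hk := hκ i
    have hp' : (T i).len (X.1 i) < κ i := hp
    change ((c i).φ b (base s (i+1))).1 (X.1 i) = (base s i).1 (X.1 i)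
    rw [base_at s i X hp'.le, ← X.2 i, (c i).idk b _ _ (by omega),
      base_at s (i+1) X (by omega), (s.1 X).2]
  | succ d ih =>
    intro i p hp
    refine (c i).loc b _ _ (κ (i+(d+1))) ?_ p hp
    intro q hq
    exact ih (i+1) q (by rwa [show i + 1 + d = i + (d+1) by omega])

theorem tau_le (b : Bool) (s : (LT T κ hκ c).Strat) (i d e : ℕ) (hde : d ≤ e) (p : (T i).P)
    (hp : (T i).len p < κ (i+d)) : (tau b s e i).1 p = (tau b s d i).1 p := by
  induction e, hde using Nat.le_induction with
  | base => rfl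
  | succ e he ih =>
    rw [tau_succ b s e i p, ih]
    exact hp.trans_le ((strictMono_nat_of_lt_succ hκ).monotone (by omega))

noncomputable def sig (b : Bool) (s : (LT T κ hκ c).Strat) (i : ℕ) : (T i).Strat :=
  ⟨fun p => (tau b s ((T i).len p + 1) i).1 p, fun p => (tau b s ((T i).len p + 1) i).2 p⟩

theorem sig_eq (b : Bool) (s : (LT T κ hκ c).Strat) (i d : ℕ) (p : (T i).P)
    (hp : (T i).len p < κ (i+d)) : (sig b s i).1 p = (tau b s d i).1 p := by
  change (tau b s ((T i).len p + 1) i).1 p = _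
  rcases le_total d ((T i).len p + 1) with h | h
  · exact tau_le b s i _ _ h p hp
  · refine (tau_le b s i _ _ h p ?_).symm
    have := le_k hκ (i + ((T i).len p + 1))
    omega

theorem sig_φ (b : Bool) (s : (LT T κ hκ c).Strat) (i : ℕ) :
    (c i).φ b (sig b s (i+1)) = sig b s i := by
  apply Subtype.ext
  funext p
  have hk := le_k hκ (i + ((T i).len p + 2))
  rw [sig_eq b s i ((T i).len p + 1 + 1) p (by
    rw [show i + ((T i).len p + 1 + 1) = i + ((T i).len p + 2) by omega]; omega)]
  refine (c i).loc b _ _ ((T i).len p + 1) ?_ p (Nat.lt_succ_self _)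
  intro q hq
  apply sig_eq
  have hk := le_k hκ (i + 1 + ((T i).len p + 1))
  omega

theorem base_congr (s s' : (LT T κ hκ c).Strat) (n : ℕ)
    (h : ∀ p, (LT T κ hκ c).len p < n → s.1 p = s'.1 p) (j : ℕ) (p : (T j).P)
    (hp : (T j).len p < n) : (base s j).1 p = (base s' j).1 p := by
  by_cases hl : (T j).len p ≤ κ j
  · obtain ⟨X, rfl⟩ := exj j T κ hκ c p hl
    rw [base_at s j X hl, base_at s' j X hl, h X]
    change (T 0).len (X.1 0) < n
    rwa [← len_eq X j]
  · simp only [base, dif_neg hl]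

theorem tau_congr (b : Bool) (s s' : (LT T κ hκ c).Strat) (n : ℕ)
    (h : ∀ p, (LT T κ hκ c).len p < n → s.1 p = s'.1 p) (d : ℕ) : ∀ (j : ℕ) (p : (T j).P)
    (_ : (T j).len p < n), (tau b s d j).1 p = (tau b s' d j).1 p := by
  induction d with
  | zero => exact base_congr s s' n h
  | succ d ih =>
    intro j p hp
    exact (c j).loc b _ _ n (ih (j+1)) p hp

theorem lift (b : Bool) (s : (LT T κ hκ c).Strat) (x : ℕ → (T 0).P) (hx : (T 0).IsPlay x)
    (hc : (T 0).Cons b (sig b s 0) x) :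
    ∃ y, (LT T κ hκ c).IsPlay y ∧ (LT T κ hκ c).Cons b s y ∧ ∀ n, (y n).1 0 = x n := by
  have key : ∀ i (z : {z : ℕ → (T i).P // (T i).IsPlay z ∧ (T i).Cons b (sig b s i) z}),
      ∃ w : {z : ℕ → (T (i+1)).P // (T (i+1)).IsPlay z ∧ (T (i+1)).Cons b (sig b s (i+1)) z},
        ∀ n, (c i).π (w.1 n) = z.1 n := by
    intro i z
    obtain ⟨w, h1, h2, h3⟩ := (c i).lift b (sig b s (i+1)) z.1 z.2.1 (by rw [sig_φ]; exact z.2.2)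
    exact ⟨⟨w, h1, h2⟩, h3⟩
  choose f hf using key
  let z : ∀ i, {z : ℕ → (T i).P // (T i).IsPlay z ∧ (T i).Cons b (sig b s i) z} := fun i =>
    Nat.rec (motive := fun i => {z : ℕ → (T i).P // (T i).IsPlay z ∧ (T i).Cons b (sig b s i) z})
      ⟨x, hx, hc⟩ (fun i q => f i q) i
  let X : ℕ → LP T κ c := fun n => ⟨fun i => (z i).1 n, fun i => hf i (z i) n⟩
  refine ⟨X, ⟨?_, ?_⟩, ?_, fun n => rfl⟩
  · exact Subtype.ext (funext fun i => (z i).2.1.1)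
  · intro n
    refine ⟨Subtype.ext (funext fun i => ((z i).2.1.2 n).1), ((z 0).2.1.2 n).2⟩
  · intro n hn
    have hl : ∀ m, (T (n+1)).len ((X m).1 (n+1)) = m := fun m => (z (n+1)).2.1.len m
    have hk := le_k hκ (n+1)
    apply uniq hκ _ _ (n+1)
    · rw [← base_at s (n+1) (X n) (by rw [hl]; omega)]
      have h1 := (z (n+1)).2.2 n hn
      have h2 := sig_eq b s (n+1) 0 ((X n).1 (n+1)) (by rw [hl]; exact hk)
      exact h1.trans h2
    · rw [hl]; exact hk

noncomputable def cov (T : ℕ → GTree.{u}) (κ : ℕ → ℕ) (hκ : ∀ i, κ i < κ (i+1))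
    (c : ∀ i, Cov (κ i) (T (i+1)) (T i)) : Cov (κ 0) (LT T κ hκ c) (T 0) where
  π x := x.1 0
  len_π x := rfl
  par_π x := rfl
  inj p q hp _ h := uniq hκ p q 0 h hp
  surj p hp := exj 0 T κ hκ c p hp
  φ b s := sig b s 0
  loc b s s' n h p hp := by
    exact tau_congr b s s' n h ((T 0).len p + 1) 0 p hp
  idk b s p hp := by
    rw [sig_eq b s 0 0 _ hp]
    exact base_at s 0 p (le_of_lt hp)
  lift b s x hx hc := lift b s x hx hc

theorem play_proj {y : ℕ → LP T κ c} (hy : (LT T κ hκ c).IsPlay y) (i : ℕ) :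
    (T i).IsPlay (fun n => (y n).1 i) := by
  refine ⟨?_, fun n => ⟨?_, ?_⟩⟩
  · exact congrFun (congrArg Subtype.val hy.1) i
  · exact congrFun (congrArg Subtype.val (hy.2 n).1) i
  · change (T i).len ((y (n+1)).1 i) = (T i).len ((y n).1 i) + 1
    rw [len_eq (y (n+1)) i, len_eq (y n) i]
    exact (hy.2 n).2

end Lim

/-! ### Unraveling Borel sets -/

def Unr {K : Type u} (A : Set (ℕ → K)) : Prop :=
  ∀ (T : GTree.{u}) (lab : T.P → K) (g : ℕ → ℕ) (k : ℕ), ∃ (S : GTree.{u}) (c : Cov k S T),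
    S.Clopen {y | (fun n => lab (c.π (y (g n)))) ∈ A}

theorem unr_cyl {K : Type u} (w : List K) : Unr (Cyl w) := by
  intro T lab g k
  refine ⟨T, Cov.refl k T, ?_⟩
  intro x hx
  refine ⟨∑ i ∈ Finset.range w.length, g i, ?_⟩
  intro y hy hyx
  have key : ∀ i, i < w.length → y (g i) = x (g i) := by
    intro i hi
    have hle : g i ≤ ∑ i ∈ Finset.range w.length, g i :=
      Finset.single_le_sum (fun _ _ => Nat.zero_le _) (Finset.mem_range.2 hi)
    rw [← hx.anc hle, ← hy.anc hle, hyx]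
  refine forall_congr' fun i => forall_congr' fun hi => ?_
  simp only [key i hi]

theorem unr_compl {K : Type u} {A : Set (ℕ → K)} (h : Unr A) : Unr Aᶜ := by
  intro T lab g k
  obtain ⟨S, c, hc⟩ := h T lab g k
  exact ⟨S, c, hc.compl⟩

theorem unr_iUnion {K : Type u} {A : ℕ → Set (ℕ → K)} (h : ∀ i, Unr (A i)) :
    Unr (⋃ i, A i) := by
  intro T lab g k
  have key : ∀ i (t : (T : GTree.{u}) × (T.P → K)), ∃ (r : (S : GTree.{u}) × (S.P → K))
      (c : Cov (k+i) r.1 t.1), (∀ p, r.2 p = t.2 (c.π p)) ∧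
        r.1.Clopen {y | (fun n => r.2 (y (g n))) ∈ A i} := by
    rintro i ⟨T, lab⟩
    obtain ⟨S, c, hc⟩ := h i T lab g (k+i)
    exact ⟨⟨S, fun p => lab (c.π p)⟩, c, fun _ => rfl, hc⟩
  choose nx cv hlab hclo using key
  let t : ℕ → (T : GTree.{u}) × (T.P → K) := fun i => Nat.rec ⟨T, lab⟩ (fun i t => nx i t) i
  let c : ∀ i, Cov (k+i) (t (i+1)).1 (t i).1 := fun i => cv i (t i)
  have hκ : ∀ i, k + i < k + (i+1) := fun i => by omega
  let L := Lim.LT (fun i => (t i).1) (fun i => k + i) hκ c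
  let C : Cov k L T := Lim.cov (fun i => (t i).1) (fun i => k + i) hκ c
  have hl : ∀ i (x : L.P), (t i).2 (x.1 i) = lab (C.π x) := by
    intro i x
    induction i with
    | zero => rfl
    | succ i ih =>
      rw [← ih, ← x.2 i]
      exact hlab i (t i) (x.1 (i+1))
  have hA : ∀ i, L.Clopen {y | (fun n => lab (C.π (y (g n)))) ∈ A i} := by
    intro i x hx
    obtain ⟨n, hn⟩ := hclo i (t i) _ (Lim.play_proj hx (i+1))
    refine ⟨n, fun y hy hyx => ?_⟩
    have h1 := hn _ (Lim.play_proj hy (i+1)) (by simp only [hyx])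
    have h2 : ∀ z : ℕ → L.P, (fun n => (t (i+1)).2 ((z (g n)).1 (i+1))) =
        (fun n => lab (C.π (z (g n)))) := fun z => funext fun n => hl (i+1) _
    have h3 := h2 x
    have h4 := h2 y
    simp only [Set.mem_ofPred_eq] at h1 ⊢
    rw [← h3, ← h4]
    exact h1
  have hO : L.Opn {y | (fun n => lab (C.π (y (g n)))) ∈ ⋃ i, A i} := by
    intro x hx hxO
    obtain ⟨i, hi⟩ := Set.mem_iUnion.1 hxO
    obtain ⟨n, hn⟩ := hA i x hx
    exact ⟨n, fun y hy hyx => Set.mem_iUnion.2 ⟨i, (hn y hy hyx).2 hi⟩⟩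
  obtain ⟨S, d, hd⟩ := unravel_open L _ hO k
  exact ⟨S, d.comp C, hd⟩

theorem unr_borel {K : Type u} {W : Set (ℕ → K)} (hW : MeasurableSet[BorelSeq K] W) : Unr W := by
  induction W, hW using MeasurableSpace.generateFrom_induction with
  | hC s hs _ => obtain ⟨w, rfl⟩ := hs; exact unr_cyl w
  | empty =>
    intro T lab g k
    exact ⟨T, Cov.refl k T, fun x _ => ⟨0, fun y _ _ => Iff.rfl⟩⟩
  | compl s hs ih => exact unr_compl ih
  | iUnion f hf ih => exact unr_iUnion ih

theorem borel_det {K : Type u} {W : Set (ℕ → K)} (hW : MeasurableSet[BorelSeq K] W)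
    (T : GTree.{u}) (lab : T.P → K) (g : ℕ → ℕ) :
    (∃ s : T.Strat, ∀ x, T.IsPlay x → T.Cons true s x → (fun n => lab (x (g n))) ∈ W) ∨
    (∃ s : T.Strat, ∀ x, T.IsPlay x → T.Cons false s x → (fun n => lab (x (g n))) ∉ W) := by
  obtain ⟨S, c, hc⟩ := unr_borel hW T lab g 0
  rcases open_det S _ hc.opn with ⟨s, hs⟩ | ⟨s, hs⟩
  · refine Or.inl ⟨c.φ true s, fun x hx hx2 => ?_⟩
    obtain ⟨y, h1, h2, h3⟩ := c.lift true s x hx hx2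
    have := hs y h1 h2
    simpa only [Set.mem_ofPred_eq, h3] using this
  · refine Or.inr ⟨c.φ false s, fun x hx hx2 => ?_⟩
    obtain ⟨y, h1, h2, h3⟩ := c.lift false s x hx hx2
    have := hs y h1 h2
    simpa only [Set.mem_ofPred_eq, h3] using this

/-! ### Lists of moves, newest first -/

def seqL {M : Type u} (f : ℕ → M) : ℕ → List M
  | 0 => []
  | n+1 => f n :: seqL f n

theorem seqL_len {M : Type u} (f : ℕ → M) (n : ℕ) : (seqL f n).length = n := by
  induction n with
  | zero => rfl
  | succ n ih => simp [seqL, ih]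

section ord
variable {M : Type u} [LinearOrder M]

/-- lexicographic order, older moves first -/
def ll : List M → List M → Prop
  | [], [] => True
  | m :: h, m' :: h' => (h = h' ∧ m ≤ m') ∨ (h ≠ h' ∧ ll h h')
  | [], _ :: _ => False
  | _ :: _, [] => False

theorem ll_refl (h : List M) : ll h h := by
  cases h with
  | nil => trivial
  | cons m h => exact Or.inl ⟨rfl, le_rfl⟩

theorem ll_antisymm : ∀ (h h' : List M), ll h h' → ll h' h → h = h'
  | [], [], _, _ => rfl
  | m :: h, m' :: h', h1, h2 => by
    rcases h1 with ⟨rfl, h1⟩ | ⟨hne, h1⟩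
    · rcases h2 with ⟨_, h2⟩ | ⟨hne, _⟩
      · rw [le_antisymm h1 h2]
      · exact absurd rfl hne
    · rcases h2 with ⟨h2, _⟩ | ⟨_, h2⟩
      · exact absurd h2.symm hne
      · exact absurd (ll_antisymm h h' h1 h2) hne

theorem ll_trans : ∀ (a b c : List M), ll a b → ll b c → ll a c
  | [], [], [], _, _ => trivial
  | x :: a, y :: b, z :: c, h1, h2 => by
    rcases h1 with ⟨rfl, h1⟩ | ⟨hne, h1⟩
    · rcases h2 with ⟨rfl, h2⟩ | ⟨hne, h2⟩
      · exact Or.inl ⟨rfl, h1.trans h2⟩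
      · exact Or.inr ⟨hne, h2⟩
    · rcases h2 with ⟨rfl, h2⟩ | ⟨hne2, h2⟩
      · exact Or.inr ⟨hne, h1⟩
      · refine Or.inr ⟨?_, ll_trans a b c h1 h2⟩
        rintro rfl
        exact hne (ll_antisymm _ _ h1 h2)

theorem ll_tail {a b : List M} (h : ll a b) : ll a.tail b.tail := by
  cases a with
  | nil => cases b with
    | nil => trivial
    | cons => exact h.elim
  | cons x a => cases b with
    | nil => exact h.elim
    | cons y b =>
      rcases h with ⟨rfl, _⟩ | ⟨_, h⟩
      · exact ll_refl _
      · exact h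

theorem ll_drop (i : ℕ) {a b : List M} (h : ll a b) : ll (a.drop i) (b.drop i) := by
  induction i generalizing a b with
  | zero => simpa using h
  | succ i ih =>
    have := ih (ll_tail h)
    simpa only [List.drop_tail] using this

theorem ll_min [WellFoundedLT M] (n : ℕ) : ∀ (X : Set (List M)), (∀ h ∈ X, h.length = n) →
    X.Nonempty → ∃ h ∈ X, ∀ h' ∈ X, ll h h' := by
  induction n with
  | zero =>
    rintro X hX ⟨h, hh⟩
    have h0 := List.eq_nil_of_length_eq_zero (hX h hh)
    refine ⟨h, hh, fun h' hh' => ?_⟩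
    rw [h0, List.eq_nil_of_length_eq_zero (hX h' hh')]
    trivial
  | succ n ih =>
    rintro X hX ⟨h, hh⟩
    obtain ⟨t, ⟨m, hm⟩, ht⟩ := ih {t | ∃ m, m :: t ∈ X}
      (by rintro t ⟨m, hm⟩; simpa using hX _ hm)
      (by
        cases h with
        | nil => simpa using hX _ hh
        | cons m t => exact ⟨t, m, hh⟩)
    have hne : ({m | m :: t ∈ X} : Set M).Nonempty := ⟨m, hm⟩
    refine ⟨wellFounded_lt.min {m | m :: t ∈ X} hne :: t,
      wellFounded_lt.min_mem {m | m :: t ∈ X} hne, ?_⟩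
    intro h' hh'
    cases h' with
    | nil => simpa using hX _ hh'
    | cons m' t' =>
      by_cases htt : t = t'
      · subst htt
        exact Or.inl ⟨rfl, not_lt.1 (wellFounded_lt.not_lt_min {m | m :: t ∈ X} hh')⟩
      · exact Or.inr ⟨htt, ht t' ⟨m', hh'⟩⟩

theorem limit_seq [WellFoundedLT M] (Good : List M → Prop)
    (htail : ∀ m h, Good (m :: h) → Good h) (h : ℕ → List M) (hlen : ∀ n, (h n).length = n)
    (hgood : ∀ n, Good (h n)) (hll : ∀ n, ∃ m, ll (h (n+1)) (m :: h n)) :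
    ∃ f : ℕ → M, ∀ n, Good (seqL f n) := by
  have hdrop : ∀ i l, Good l → Good (l.drop i) := by
    intro i
    induction i with
    | zero => intro l hl; simpa using hl
    | succ i ih =>
      intro l hl
      cases l with
      | nil => simpa using hl
      | cons m l => simpa using ih l (htail m l hl)
  let d : ℕ → ℕ → List M := fun j n => (h n).drop (n - j)
  have hd : ∀ j n, j ≤ n → (d j n).length = j := by
    intro j n hj
    simp only [d, List.length_drop, hlen]; omega
  have hstep : ∀ j n, j ≤ n → ll (d j (n+1)) (d j n) := by
    intro j n hj
    obtain ⟨m, hm⟩ := hll n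
    have := ll_drop (n + 1 - j) hm
    rw [show n + 1 - j = (n - j) + 1 by omega, List.drop_succ_cons] at this
    simpa only [d, show n + 1 - j = (n - j) + 1 by omega] using this
  have hmono : ∀ j n n', j ≤ n → n ≤ n' → ll (d j n') (d j n) := by
    intro j n n' hj hn
    induction n', hn using Nat.le_induction with
    | base => exact ll_refl _
    | succ n' hn ih => exact ll_trans _ _ _ (hstep j n' (hj.trans hn)) ih
  have hstab : ∀ j, ∃ N, j ≤ N ∧ ∀ n, N ≤ n → d j n = d j N := by
    intro j
    obtain ⟨l, ⟨N, hN, rfl⟩, hmin⟩ := ll_min j {l | ∃ n, j ≤ n ∧ d j n = l}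
      (by rintro l ⟨n, hn, rfl⟩; exact hd j n hn) ⟨_, j, le_rfl, rfl⟩
    exact ⟨N, hN, fun n hn => ll_antisymm _ _ (hmono j N n hN hn) (hmin _ ⟨n, hN.trans hn, rfl⟩)⟩
  choose N hN hst using hstab
  let E : ℕ → List M := fun j => d j (N j)
  have hElen : ∀ j, (E j).length = j := fun j => hd j _ (hN j)
  have hEtail : ∀ j, (E (j+1)).tail = E j := by
    intro j
    have h1 := hst j (max (N j) (N (j+1))) (le_max_left _ _)
    have h2 := hst (j+1) (max (N j) (N (j+1))) (le_max_right _ _)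
    have h3 := hN (j+1)
    have h4 : N (j+1) ≤ max (N j) (N (j+1)) := le_max_right _ _
    change (d (j+1) (N (j+1))).tail = d j (N j)
    rw [← h1, ← h2]
    simp only [d, List.tail_drop]
    congr 1
    omega
  have hne : ∀ j, E (j+1) ≠ [] := fun j h0 => by
    have := hElen (j+1)
    rw [h0] at this
    simp at this
  refine ⟨fun j => (E (j+1)).head (hne j), fun n => ?_⟩
  have hE : seqL (fun j => (E (j+1)).head (hne j)) n = E n := by
    induction n with
    | zero => exact (List.eq_nil_of_length_eq_zero (hElen 0)).symm
    | succ n ih =>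
      rw [seqL, ih, ← hEtail n]
      exact List.cons_head_tail (hne n)
  rw [hE]
  exact hdrop _ _ (hgood _)

end ord

/-! ### The turn-based game -/

section turn
variable {A B Q K : Type u} (q0 : Q) (δ : Q → A → B → Q) (col : Q → Q → K)

def st : List (A × B) → Q
  | [] => q0
  | m :: h => δ (st h) m.1 m.2

def cl : List (A × B) → List K
  | [] => []
  | m :: h => cl h ++ [col (st q0 δ h) (st q0 δ (m :: h))]

def CH (ok : List (A × B) → A × B → Prop) : List (A × B) → Prop
  | [] => True
  | m :: h => ok h m ∧ CH ok h

def colors (f : ℕ → A × B) : ℕ → K :=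
  fun n => col (st q0 δ (seqL f n)) (st q0 δ (seqL f (n+1)))

theorem cl_len (h : List (A × B)) : (cl q0 δ col h).length = h.length := by
  induction h with
  | nil => rfl
  | cons m h ih => simp [cl, ih]

def gpar : List (A × B) × Option A → List (A × B) × Option A
  | (h, some _) => (h, none)
  | ([], none) => ([], none)
  | (m :: h, none) => (h, some m.1)

def glen : List (A × B) × Option A → ℕ
  | (h, some _) => 2 * h.length + 1
  | (h, none) => 2 * h.length

def GT (A B : Type u) [Nonempty A] [Nonempty B] : GTree.{u} where
  P := List (A × B) × Option A
  len := glen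
  par := gpar
  root := ([], none)
  len_root := rfl
  eq_root := by
    rintro ⟨_ | ⟨m, h⟩, _ | a⟩ hp <;> simp [glen] at hp ⊢
  len_par := by
    rintro ⟨_ | ⟨m, h⟩, _ | a⟩ <;> simp [glen, gpar]
    omega
  ext := by
    rintro ⟨h, _ | a⟩
    · exact ⟨(h, some (Classical.arbitrary A)), rfl, rfl⟩
    · exact ⟨((a, Classical.arbitrary B) :: h, none), rfl, rfl⟩

def glab : List (A × B) × Option A → K
  | (m :: h, _) => col (st q0 δ h) (st q0 δ (m :: h))
  | ([], _) => col q0 q0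

def gplay (f : ℕ → A × B) (n : ℕ) : List (A × B) × Option A :=
  (seqL f (n/2), if n % 2 = 0 then none else some (f (n/2)).1)

theorem gplay_even (f : ℕ → A × B) (n : ℕ) : gplay f (2*n) = (seqL f n, none) := by
  unfold gplay
  rw [show 2 * n / 2 = n by omega, if_pos (by omega)]

theorem gplay_odd (f : ℕ → A × B) (n : ℕ) : gplay f (2*n+1) = (seqL f n, some (f n).1) := by
  unfold gplay
  rw [show (2 * n + 1) / 2 = n by omega, if_neg (by omega)]

theorem gplay_isPlay [Nonempty A] [Nonempty B] (f : ℕ → A × B) : (GT A B).IsPlay (gplay f) := by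
  refine ⟨rfl, fun n => ?_⟩
  obtain ⟨m, rfl | rfl⟩ : ∃ m, n = 2 * m ∨ n = 2 * m + 1 := ⟨n / 2, by omega⟩
  · rw [gplay_odd, gplay_even]
    exact ⟨rfl, rfl⟩
  · rw [gplay_odd, show 2 * m + 1 + 1 = 2 * (m + 1) by omega, gplay_even]
    exact ⟨rfl, rfl⟩

theorem turn_det [Nonempty A] [Nonempty B] {W : Set (ℕ → K)} (hW : MeasurableSet[BorelSeq K] W) :
    (∃ α : List (A × B) → A, ∀ f : ℕ → A × B, (∀ n, (f n).1 = α (seqL f n)) →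
      colors q0 δ col f ∈ W) ∨
    (∃ β : List (A × B) → A → B, ∀ f : ℕ → A × B, (∀ n, (f n).2 = β (seqL f n) (f n).1) →
      colors q0 δ col f ∉ W) := by
  have hcol : ∀ f : ℕ → A × B, (fun n => glab q0 δ col (gplay f (2*(n+1)))) = colors q0 δ col f := by
    intro f
    funext n
    rw [gplay_even]
    rfl
  rcases borel_det hW (GT A B) (glab q0 δ col) (fun n => 2*(n+1)) with ⟨s, hs⟩ | ⟨s, hs⟩
  · left
    have key : ∀ h : List (A × B), ∃ a : A, s.1 (h, none) = (h, some a) := by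
      intro h
      have h1 : gpar (s.1 (h, none)) = (h, none) := (s.2 (h, none)).1
      have h2 : glen (s.1 (h, none)) = 2 * h.length + 1 := (s.2 (h, none)).2
      revert h1 h2
      generalize s.1 (h, none) = c
      obtain ⟨_ | ⟨m, h'⟩, _ | a⟩ := c <;> intro h1 h2
      · simp [glen] at h2
      · exact ⟨a, by simp [gpar] at h1; rw [h1]⟩
      · simp [gpar] at h1
      · exact ⟨a, by simp [gpar] at h1; rw [h1]⟩
    choose α hα using key
    refine ⟨α, fun f hf => ?_⟩
    rw [← hcol]
    refine hs (gplay f) (gplay_isPlay f) ?_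
    intro n hn
    obtain ⟨m, rfl⟩ : ∃ m, n = 2 * m := by
      obtain ⟨m, hm⟩ := hn.2 rfl
      exact ⟨m, by omega⟩
    rw [gplay_odd, gplay_even, hf]
    exact (hα _).symm
  · right
    have key : ∀ (h : List (A × B)) (a : A), ∃ b : B, s.1 (h, some a) = ((a, b) :: h, none) := by
      intro h a
      have h1 : gpar (s.1 (h, some a)) = (h, some a) := (s.2 (h, some a)).1
      have h2 : glen (s.1 (h, some a)) = 2 * h.length + 1 + 1 := (s.2 (h, some a)).2
      revert h1 h2
      generalize s.1 (h, some a) = c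
      obtain ⟨_ | ⟨⟨a', b⟩, h'⟩, _ | a⟩ := c <;> intro h1 h2
      · simp [gpar] at h1
      · simp [gpar] at h1
      · refine ⟨b, ?_⟩
        simp [gpar] at h1
        rw [h1.1, h1.2]
      · simp [gpar] at h1
    choose β hβ using key
    refine ⟨β, fun f hf => ?_⟩
    rw [← hcol]
    refine hs (gplay f) (gplay_isPlay f) ?_
    intro n hn
    obtain ⟨m, rfl⟩ : ∃ m, n = 2 * m + 1 := by
      have : ¬ Even n := fun h => by simpa using hn.1 h
      obtain ⟨m, hm⟩ := Nat.not_even_iff_odd.1 this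
      exact ⟨m, hm⟩
    rw [gplay_odd, show 2 * m + 1 + 1 = 2 * (m + 1) by omega, gplay_even]
    refine Eq.trans ?_ (hβ _ _).symm
    rw [← hf]
    rfl

/-! ### From histories to color strategies -/

def XS (ok : List (A × B) → A × B → Prop) (c : List K) (q : Q) : Set (List (A × B)) :=
  {h | h.length = c.length ∧ CH ok h ∧ cl q0 δ col h = c ∧ st q0 δ h = q}

theorem colorHist_succ (π : ℕ → Q) (n : ℕ) :
    colorHist col π (n+1) = colorHist col π n ++ [colorSeq col π n] := by
  unfold colorHist colorSeq
  rw [List.ofFn_succ_last]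
  rfl

theorem colorHist_len (π : ℕ → Q) (n : ℕ) : (colorHist col π n).length = n := by
  simp [colorHist]

theorem pick_exists (ok : List (A × B) → A × B → Prop) :
    ∃ pick : List K → Q → List (A × B), ∀ π : ℕ → Q, π 0 = q0 →
      (∀ n, pick (colorHist col π n) (π n) ∈ XS q0 δ col ok (colorHist col π n) (π n) →
        ∃ m, ok (pick (colorHist col π n) (π n)) m ∧
          π (n+1) = δ (π n) m.1 m.2) →
      ∃ f : ℕ → A × B, (∀ n, ok (seqL f n) (f n)) ∧ colors q0 δ col f = colorSeq col π := by
  obtain ⟨_, _⟩ := exists_wellFoundedLT (A × B)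
  have hmin : ∀ (c : List K) (q : Q), ∃ h, (XS q0 δ col ok c q).Nonempty →
      h ∈ XS q0 δ col ok c q ∧ ∀ h' ∈ XS q0 δ col ok c q, ll h h' := by
    intro c q
    by_cases hne : (XS q0 δ col ok c q).Nonempty
    · obtain ⟨h, h1, h2⟩ := ll_min c.length (XS q0 δ col ok c q) (fun h hh => hh.1) hne
      exact ⟨h, fun _ => ⟨h1, h2⟩⟩
    · exact ⟨[], fun h => absurd h hne⟩
  choose pick hpick using hmin
  refine ⟨pick, fun π h0 hstep => ?_⟩
  let h : ℕ → List (A × B) := fun n => pick (colorHist col π n) (π n)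
  have hX : ∀ n m, h n ∈ XS q0 δ col ok (colorHist col π n) (π n) → ok (h n) m →
      π (n+1) = δ (π n) m.1 m.2 →
      (m :: h n) ∈ XS q0 δ col ok (colorHist col π (n+1)) (π (n+1)) := by
    rintro n m ⟨h1, h2, h3, h4⟩ hok hpi
    have h5 : st q0 δ (m :: h n) = π (n+1) := by rw [st, h4, hpi]
    refine ⟨?_, ⟨hok, h2⟩, ?_, h5⟩
    · rw [List.length_cons, h1, colorHist_len, colorHist_len]
    · rw [cl, h3, h5, h4, colorHist_succ]; rfl
  have hmem : ∀ n, h n ∈ XS q0 δ col ok (colorHist col π n) (π n) := by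
    intro n
    induction n with
    | zero => exact (hpick _ _ ⟨[], rfl, trivial, rfl, h0.symm⟩).1
    | succ n ih =>
      obtain ⟨m, h1, h2⟩ := hstep n ih
      exact (hpick _ _ ⟨_, hX n m ih h1 h2⟩).1
  obtain ⟨f, hf⟩ := limit_seq (fun l => CH ok l ∧ cl q0 δ col l = colorHist col π l.length)
    (by
      rintro m l ⟨⟨_, h1⟩, h2⟩
      refine ⟨h1, ?_⟩
      rw [cl, List.length_cons, colorHist_succ] at h2
      exact (List.append_inj' h2 rfl).1) h
    (fun n => by rw [(hmem n).1, colorHist_len])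
    (fun n => ⟨(hmem n).2.1, by rw [(hmem n).2.2.1, (hmem n).1, colorHist_len]⟩)
    (fun n => by
      obtain ⟨m, h1, h2⟩ := hstep n (hmem n)
      have h3 := hX n m (hmem n) h1 h2
      exact ⟨m, (hpick _ _ ⟨_, h3⟩).2 _ h3⟩)
  refine ⟨f, fun n => (hf (n+1)).1.1, funext fun n => ?_⟩
  have h2 := (hf (n+1)).2
  rw [seqL_len, colorHist_succ, seqL, cl] at h2
  exact List.singleton_injective (List.append_inj' h2 rfl).2

end turn

theorem main {A B Q K : Type u} [Nonempty A] [Nonempty B]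
    (q0 : Q) (δ : Q → A → B → Q) (col : Q → Q → K)
    (hloc : ∀ q : Q, GFDetermined (δ q))
    (W : Set (ℕ → K)) (hW : MeasurableSet[BorelSeq K] W) :
    (∃ sA : List K → Q → A, WinA q0 δ col W sA) ∨
    (∃ sB : List K → Q → B, WinB q0 δ col W sB) := by
  rcases turn_det q0 δ col hW with ⟨α, hα⟩ | ⟨β, hβ⟩
  · left
    obtain ⟨pick, hp⟩ := pick_exists q0 δ col (fun h m => m.1 = α h)
    refine ⟨fun c q => α (pick c q), fun π hπ => ?_⟩
    obtain ⟨f, h1, h2⟩ := hp π hπ.1 (fun n _ => by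
      obtain ⟨b, hb⟩ := hπ.2 n
      exact ⟨(_, b), rfl, hb⟩)
    rw [← h2]
    exact hα f h1
  · right
    obtain ⟨pick, hp⟩ := pick_exists q0 δ col (fun h m => m.2 = β h m.1)
    have key : ∀ (c : List K) (q : Q), ∃ b, ∀ a, ∃ a', δ q a b = δ q a' (β (pick c q) a') := by
      intro c q
      rcases hloc q {p | ¬ ∃ a', p = δ q a' (β (pick c q) a')} with ⟨a, ha⟩ | ⟨b, hb⟩
      · exact absurd ⟨a, rfl⟩ (ha (β (pick c q) a))
      · exact ⟨b, fun a => not_not.1 (hb a)⟩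
    choose sB hsB using key
    refine ⟨sB, fun π hπ => ?_⟩
    obtain ⟨f, h1, h2⟩ := hp π hπ.1 (fun n _ => by
      obtain ⟨a, ha⟩ := hπ.2 n
      obtain ⟨a', ha'⟩ := hsB (colorHist col π n) (π n) a
      exact ⟨(a', _), rfl, ha.trans ha'⟩)
    rw [← h2]
    exact hβ f h1
end BD

/-- Borel determinacy of locally determined deterministic concurrent games:
if every local interaction of the deterministic concurrent arena
`C = ⟨A, B, Q, q0, δ, K, col⟩` is a determined game form and `W ⊆ K^ω` is Borel,
then either Player A or Player B has a winning color strategy in `⟨C, W⟩`. -/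
theorem stmt1 {A B Q K : Type u} [Nonempty A] [Nonempty B] [Nonempty Q] [Nonempty K]
    (q0 : Q) (δ : Q → A → B → Q) (col : Q → Q → K)
    (hloc : ∀ q : Q, GFDetermined (δ q))
    (W : Set (ℕ → K)) (hW : MeasurableSet[BorelSeq K] W) :
    (∃ sA : List K → Q → A, WinA q0 δ col W sA) ∨
    (∃ sB : List K → Q → B, WinB q0 δ col W sB) := by
  exact BD.main q0 δ col hloc W hW
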